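/- arXiv:2402.04602 — 2 statements merged into one kernel-verified Lean document; each statement's English description precedes it below -/
import Mathlib

section
/- Let f(β) := (1/n) ∑_{i=1}^{n} ρ_{Q,τ}(Y_i − ⟨X_i, β⟩), where the covariates {X_i}_{i=1}^n follow Assumption 1 and {(X_i, Y_i)}_{i=1}^n are independent observations. Then there exist constants C_1, C_2 > 0 such that with probability exceeding 1 − exp(−C_1 d) − exp(−√(n/log n)), it holds simultaneously for all β_1, β_2 ∈ R^d that |f(β_1) − f(β_2) − E[f(β_1) − f(β_2)]| ≤ C_2 max{τ, 1−τ} √(C_u d/n) ‖β_1 − β_2‖_2. -/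
open MeasureTheory ProbabilityTheory

noncomputable section

/-- The quantile (check) loss `ρ_{Q,τ}(x) = τ x 1{x ≥ 0} + (τ−1) x 1{x < 0}`. -/
def qloss (τ x : ℝ) : ℝ := if 0 ≤ x then τ * x else (τ - 1) * x

/-- The quadratic form `v ↦ vᵀ Σ v` of a matrix on Euclidean space. -/
def quadForm {d : ℕ} (S : Matrix (Fin d) (Fin d) ℝ) (v : EuclideanSpace ℝ (Fin d)) : ℝ :=
  dotProduct (fun i => v i) (S.mulVec fun i => v i)

open Finset Module
open scoped NNReal ENNReal Topology

/-! Ghost sample and random signs: by Chebyshev's inequality each single deviation is moderate with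
probability `1 / 2`, so the uniform deviation is controlled by that of the signed sums
`∑ i, ε i * (ρ (y i - ⟪x i, β₁⟫) - ρ (y i - ⟪x i, β₂⟫))` on a fixed sample. Along the segment from
`β₂` to `β₁` the derivative of such a sum only involves the vectors `∑ i ∈ A, ε i • x i`, where
`A` is the trace of a half-space, hence a member of a set family of VC dimension at most `d`.
These vectors are bounded by chaining over the family, with Haussler's packing bound for the nets
and an operator norm bound for the partial Gram matrices `∑ i ∈ B, x i ⊗ x i`, simultaneous in the
subset `B`, for the size of the increments. -/

section Nets

theorem exists_separated_cover {α : Type*} {r : α → α → Prop} (hrefl : ∀ a, r a a)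
    (hsymm : ∀ a b, r a b → r b a) {P : α → Prop} {K : ℕ}
    (hK : ∀ s : Finset α, (∀ a ∈ s, P a) → (s : Set α).Pairwise (fun a b ↦ ¬ r a b) → #s ≤ K) :
    ∃ s : Finset α, (∀ a ∈ s, P a) ∧ (s : Set α).Pairwise (fun a b ↦ ¬ r a b) ∧
      ∀ a, P a → ∃ b ∈ s, r a b := by
  classical
  by_contra! hcon
  have hbig : ∀ m : ℕ, ∃ s : Finset α,
      #s = m ∧ (∀ a ∈ s, P a) ∧ (s : Set α).Pairwise (fun a b ↦ ¬ r a b) := by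
    intro m
    induction m with
    | zero => exact ⟨∅, by simp⟩
    | succ m ih =>
      obtain ⟨s, hcard, hP, hsep⟩ := ih
      obtain ⟨a, ha, hfar⟩ := hcon s hP hsep
      have has : a ∉ s := fun h ↦ hfar a h (hrefl a)
      refine ⟨insert a s, by rw [card_insert_of_notMem has, hcard],
        by simpa [ha] using hP, ?_⟩
      rw [coe_insert]
      exact hsep.insert fun b hb _ ↦ ⟨hfar b hb, fun h ↦ hfar b hb (hsymm _ _ h)⟩
  obtain ⟨s, hcard, hP, hsep⟩ := hbig (K + 1)
  have := hK s hP hsep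
  lia

variable {E F : Type*} [NormedAddCommGroup E] [NormedSpace ℝ E]
  [SeminormedAddCommGroup F] [NormedSpace ℝ F]

theorem opNorm_le_two_mul_of_half_net {N : Finset E}
    (hcover : ∀ v : E, ‖v‖ ≤ 1 → ∃ w ∈ N, ‖v - w‖ ≤ 1 / 2) {T : E →L[ℝ] F} {M : ℝ}
    (hM : ∀ w ∈ N, ‖T w‖ ≤ M) : ‖T‖ ≤ 2 * M := by
  have hM0 : 0 ≤ M := by
    obtain ⟨w, hw, -⟩ := hcover 0 (by simp)
    exact (norm_nonneg _).trans (hM w hw)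
  have hunit : ‖T‖ ≤ M + ‖T‖ / 2 := by
    refine T.opNorm_le_of_unit_norm (by positivity) fun v hv ↦ ?_
    obtain ⟨w, hw, hvw⟩ := hcover v hv.le
    calc ‖T v‖ = ‖T w + T (v - w)‖ := by rw [← map_add, add_sub_cancel]
      _ ≤ ‖T w‖ + ‖T‖ * ‖v - w‖ := norm_add_le_of_le le_rfl (T.le_opNorm _)
      _ ≤ M + ‖T‖ * (1 / 2) := by gcongr; exact hM w hw
      _ = M + ‖T‖ / 2 := by ring
  linarith

variable (E) in
theorem exists_half_net_closedBall [FiniteDimensional ℝ E] :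
    ∃ N : Finset E, #N ≤ 5 ^ finrank ℝ E ∧ (∀ w ∈ N, ‖w‖ ≤ 1) ∧
      ∀ v : E, ‖v‖ ≤ 1 → ∃ w ∈ N, ‖v - w‖ ≤ 1 / 2 := by
  classical
  have hcard (s : Finset E) (hball : ∀ w ∈ s, ‖w‖ ≤ 1)
      (hsep : (s : Set E).Pairwise fun v w ↦ ¬ ‖v - w‖ ≤ 1 / 2) : #s ≤ 5 ^ finrank ℝ E := by
    have hdouble : #(s.image fun w ↦ (2 : ℝ) • w) = #s :=
      card_image_of_injective _ (smul_right_injective E two_ne_zero)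
    rw [← hdouble]
    refine Besicovitch.card_le_of_separated _ ?_ ?_
    · simp only [forall_mem_image, norm_smul, Real.norm_ofNat]
      intro w hw
      linarith [hball w hw]
    · simp only [forall_mem_image, ← smul_sub, norm_smul, Real.norm_ofNat]
      intro v hv w hw hne
      linarith [not_le.1 (hsep hv hw fun h ↦ hne (by rw [h]))]
  obtain ⟨N, hball, hsep, hcover⟩ := exists_separated_cover (P := fun w : E ↦ ‖w‖ ≤ 1)
    (r := fun v w : E ↦ ‖v - w‖ ≤ 1 / 2) (by simp) (fun v w h ↦ by rwa [norm_sub_rev]) hcard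
  exact ⟨N, hcard N hball hsep, hball, hcover⟩

theorem five_pow_le_exp_two_mul (d : ℕ) : (5 : ℝ) ^ d ≤ Real.exp (2 * d) := by
  have h5 : (5 : ℝ) ≤ Real.exp 2 := by
    rw [show (2 : ℝ) = 1 + 1 by norm_num, Real.exp_add]
    nlinarith [Real.exp_one_gt_d9]
  calc (5 : ℝ) ^ d ≤ Real.exp 2 ^ d := by gcongr
    _ = Real.exp (2 * d) := by rw [← Real.exp_nat_mul, mul_comm]

end Nets

section SubGaussian

variable {Ω : Type*} {mΩ : MeasurableSpace Ω} {μ : Measure Ω}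

theorem lintegral_exp_sq_div_four_gaussianReal_le :
    ∫⁻ x, ENNReal.ofReal (Real.exp (x ^ 2 / 4)) ∂gaussianReal 0 1 ≤ 2 := by
  have hdensity (x : ℝ) : gaussianPDF 0 1 x * ENNReal.ofReal (Real.exp (x ^ 2 / 4))
      = ENNReal.ofReal ((√(2 * Real.pi))⁻¹ * Real.exp (-(1 / 4) * x ^ 2)) := by
    rw [gaussianPDF, gaussianPDFReal, ← ENNReal.ofReal_mul (by positivity), mul_assoc,
      ← Real.exp_add]
    congr 3 <;> norm_num
    ring
  rw [gaussianReal_of_var_ne_zero 0 one_ne_zero,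
    lintegral_withDensity_eq_lintegral_mul _ (measurable_gaussianPDF 0 1) (by fun_prop)]
  simp only [Pi.mul_apply, hdensity]
  rw [← ofReal_integral_eq_lintegral_ofReal
    ((integrable_exp_neg_mul_sq (by norm_num)).const_mul _)
    (Filter.Eventually.of_forall fun x ↦ by positivity), integral_const_mul, integral_gaussian,
    ← ENNReal.ofReal_ofNat]
  refine ENNReal.ofReal_le_ofReal ?_
  rw [inv_mul_le_iff₀ (by positivity), Real.sqrt_le_left (by positivity), mul_pow,
    Real.sq_sqrt (by positivity)]
  linarith [Real.pi_pos]

theorem lintegral_exp_mul_eq_ofReal_mgf {X : Ω → ℝ} {t : ℝ}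
    (hX : Integrable (fun ω ↦ Real.exp (t * X ω)) μ) :
    ∫⁻ ω, ENNReal.ofReal (Real.exp (t * X ω)) ∂μ = ENNReal.ofReal (mgf X μ t) :=
  (ofReal_integral_eq_lintegral_ofReal hX
    (Filter.Eventually.of_forall fun _ ↦ Real.exp_nonneg _)).symm

/- Gaussian decoupling: `exp (X² / 4c)` is the moment generating function of an independent
standard Gaussian `g` at `X / √(2c)`; integrating over `X` first leaves `E exp (g² / 4)`. -/
theorem lintegral_exp_sq_div_le_two [SFinite μ] {X : Ω → ℝ} {c : ℝ≥0}
    (hX : HasSubgaussianMGF X c μ) (hc : 0 < c) :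
    ∫⁻ ω, ENNReal.ofReal (Real.exp (X ω ^ 2 / (4 * c))) ∂μ ≤ 2 := by
  set t : ℝ := (√(2 * c))⁻¹
  have ht : t ^ 2 = (2 * c : ℝ)⁻¹ := by rw [inv_pow, Real.sq_sqrt (by positivity)]
  have hdecouple (ω : Ω) : ENNReal.ofReal (Real.exp (X ω ^ 2 / (4 * c)))
      = ∫⁻ g, ENNReal.ofReal (Real.exp (t * X ω * g)) ∂gaussianReal 0 1 := by
    rw [lintegral_exp_mul_eq_ofReal_mgf (X := fun g ↦ g) (integrable_exp_mul_gaussianReal _),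
      mgf_gaussianReal (μ := 0) (v := 1) Measure.map_id', mul_pow, ht]
    congr 2
    push_cast
    field_simp
    ring
  have hinner (g : ℝ) : ∫⁻ ω, ENNReal.ofReal (Real.exp (t * X ω * g)) ∂μ
      ≤ ENNReal.ofReal (Real.exp (g ^ 2 / 4)) := by
    simp only [mul_right_comm t _ g]
    rw [lintegral_exp_mul_eq_ofReal_mgf (hX.integrable_exp_mul _)]
    refine ENNReal.ofReal_le_ofReal ((hX.mgf_le _).trans_eq ?_)
    rw [mul_pow, ht]
    field_simp
    norm_num
  have hmeas : AEMeasurable (Function.uncurry fun ω g ↦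
      ENNReal.ofReal (Real.exp (t * X ω * g))) (μ.prod (gaussianReal 0 1)) :=
    (((hX.aemeasurable.comp_fst.const_mul t).mul measurable_snd.aemeasurable).exp).ennreal_ofReal
  simp only [hdecouple]
  rw [lintegral_lintegral_swap hmeas]
  exact (lintegral_mono hinner).trans lintegral_exp_sq_div_four_gaussianReal_le

theorem integral_sq_le_four_mul [IsProbabilityMeasure μ] {X : Ω → ℝ} {c : ℝ≥0}
    (hX : HasSubgaussianMGF X c μ) (hc : 0 < c) : ∫ ω, X ω ^ 2 ∂μ ≤ 4 * c := by
  have hint : Integrable (fun ω ↦ X ω ^ 2) μ := (hX.memLp 2).integrable_sq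
  have hlint : ∫⁻ ω, ENNReal.ofReal (X ω ^ 2 / (4 * c) + 1) ∂μ ≤ 2 :=
    (lintegral_mono fun ω ↦ ENNReal.ofReal_le_ofReal (Real.add_one_le_exp _)).trans
      (lintegral_exp_sq_div_le_two hX hc)
  have hint' : Integrable (fun ω ↦ X ω ^ 2 / (4 * c) + 1) μ :=
    (hint.div_const _).add (integrable_const _)
  rw [← ofReal_integral_eq_lintegral_ofReal hint'
    (Filter.Eventually.of_forall fun ω ↦ by positivity), integral_add (hint.div_const _)
    (integrable_const _), integral_div, integral_const, probReal_univ, one_smul,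
    ← ENNReal.ofReal_ofNat, ENNReal.ofReal_le_ofReal_iff zero_le_two] at hlint
  have hbound : (∫ ω, X ω ^ 2 ∂μ) / (4 * c) ≤ 1 := by linarith
  rwa [div_le_one (by positivity)] at hbound

theorem measureReal_four_mul_lt_sum_sq_le {ι : Type*} {X : ι → Ω → ℝ} {c : ℝ≥0}
    (hmeas : ∀ i, Measurable (X i)) (hindep : iIndepFun X μ)
    (hX : ∀ i, HasSubgaussianMGF (X i) c μ) (hc : 0 < c) (B : Finset ι) (s : ℝ) :
    μ.real {ω | 4 * c * s < ∑ i ∈ B, X i ω ^ 2} ≤ 2 ^ #B * Real.exp (-s) := by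
  have := hindep.isProbabilityMeasure
  set Z : ι → Ω → ℝ≥0∞ := fun i ω ↦ ENNReal.ofReal (Real.exp (X i ω ^ 2 / (4 * c)))
  have hZ (i : ι) : Measurable (Z i) := by fun_prop
  have hmoment : ∫⁻ ω, ∏ i ∈ B, Z i ω ∂μ ≤ 2 ^ #B := by
    rw [lintegral_prod_eq_prod_lintegral_of_indepFun B Z (hindep.comp
      (fun _ x ↦ ENNReal.ofReal (Real.exp (x ^ 2 / (4 * c)))) fun _ ↦ by fun_prop) hZ,
      ← prod_const]
    exact prod_le_prod' fun i _ ↦ lintegral_exp_sq_div_le_two (hX i) hc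
  have hsubset : {ω | 4 * c * s < ∑ i ∈ B, X i ω ^ 2}
      ⊆ {ω | ENNReal.ofReal (Real.exp s) ≤ ∏ i ∈ B, Z i ω} := by
    intro ω hω
    simp only [Set.mem_ofPred_eq] at hω ⊢
    rw [← ENNReal.ofReal_prod_of_nonneg fun i _ ↦ Real.exp_nonneg _, ← Real.exp_sum, ← sum_div]
    gcongr
    rw [le_div_iff₀ (by positivity)]
    linarith
  have hmarkov : μ {ω | 4 * c * s < ∑ i ∈ B, X i ω ^ 2}
      ≤ ENNReal.ofReal (2 ^ #B * Real.exp (-s)) :=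
    calc _ ≤ μ {ω | ENNReal.ofReal (Real.exp s) ≤ ∏ i ∈ B, Z i ω} := measure_mono hsubset
      _ ≤ (∫⁻ ω, ∏ i ∈ B, Z i ω ∂μ) / ENNReal.ofReal (Real.exp s) :=
        meas_ge_le_lintegral_div (B.measurable_fun_prod fun i _ ↦ hZ i).aemeasurable
          (by simp [Real.exp_pos]) (by simp)
      _ ≤ 2 ^ #B / ENNReal.ofReal (Real.exp s) := by gcongr
      _ = ENNReal.ofReal (2 ^ #B * Real.exp (-s)) := by
        rw [Real.exp_neg, ← div_eq_mul_inv, ENNReal.ofReal_div_of_pos (Real.exp_pos s),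
          ENNReal.ofReal_pow zero_le_two, ENNReal.ofReal_ofNat]
  exact ENNReal.toReal_le_of_le_ofReal (by positivity) hmarkov

theorem measureReal_sqrt_two_mul_lt_abs_le {X : Ω → ℝ} {c : ℝ≥0} [IsFiniteMeasure μ]
    (hX : HasSubgaussianMGF X c μ) (hc : 0 < c) {s : ℝ} (hs : 0 ≤ s) :
    μ.real {ω | √(2 * c * s) < |X ω|} ≤ 2 * Real.exp (-s) := by
  have hexponent : -√(2 * c * s) ^ 2 / (2 * c) = -s := by
    rw [Real.sq_sqrt (by positivity)]
    field_simp
  have hright := hX.measure_ge_le (Real.sqrt_nonneg (2 * c * s))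
  have hleft := hX.neg.measure_ge_le (Real.sqrt_nonneg (2 * c * s))
  rw [hexponent] at hright hleft
  calc μ.real {ω | √(2 * c * s) < |X ω|}
      ≤ μ.real ({ω | √(2 * c * s) ≤ X ω} ∪ {ω | √(2 * c * s) ≤ (-X) ω}) :=
        measureReal_mono fun ω (hω : _ < |X ω|) ↦ (lt_abs.1 hω).imp LT.lt.le LT.lt.le
    _ ≤ _ := measureReal_union_le _ _
    _ ≤ 2 * Real.exp (-s) := by linarith

theorem hasSubgaussianMGF_of_le {X : Ω → ℝ} {c c' : ℝ≥0} (hX : HasSubgaussianMGF X c μ)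
    (hc : c ≤ c') : HasSubgaussianMGF X c' μ where
  integrable_exp_mul := hX.integrable_exp_mul
  mgf_le t := (hX.mgf_le t).trans (by gcongr)

theorem hasSubgaussianMGF_of_map_eq_gaussianReal {Z : Ω → ℝ} {v : ℝ≥0}
    (hZ : μ.map Z = gaussianReal 0 v) : HasSubgaussianMGF Z v μ where
  integrable_exp_mul t := by
    have hmeas : AEMeasurable Z μ := aemeasurable_of_map_neZero (by rw [hZ]; infer_instance)
    have hexp : Integrable (fun z ↦ Real.exp (t * z)) (μ.map Z) := by
      rw [hZ]
      exact integrable_exp_mul_gaussianReal t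
    exact hexp.comp_aemeasurable hmeas
  mgf_le t := by rw [mgf_gaussianReal hZ, zero_mul, zero_add]

end SubGaussian

open scoped RealInnerProductSpace symmDiff

section Counting

variable {α : Type*}

theorem choose_le_exp_two_mul_sqrt (n k : ℕ) : (n.choose k : ℝ) ≤ Real.exp (2 * √(n * k)) := by
  have hfactorial : ((2 * k).factorial : ℝ) ≤ 4 ^ k * k.factorial * k ^ k := by
    have hcentral := Nat.choose_le_two_pow (2 * k) k
    rw [pow_mul] at hcentral
    have h := Nat.choose_mul_factorial_mul_factorial (show k ≤ 2 * k by lia)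
    rw [show 2 * k - k = k by lia] at h
    rw [← h]
    exact_mod_cast Nat.mul_le_mul (Nat.mul_le_mul_right _ hcentral) (Nat.factorial_le_pow k)
  calc (n.choose k : ℝ) ≤ n ^ k / k.factorial := Nat.choose_le_pow_div k n
    _ ≤ (2 * √(n * k)) ^ (2 * k) / (2 * k).factorial := by
      rw [div_le_div_iff₀ (by positivity) (by positivity), pow_mul, mul_pow,
        Real.sq_sqrt (by positivity), mul_pow, mul_pow]
      calc (n : ℝ) ^ k * (2 * k).factorial ≤ n ^ k * (4 ^ k * k.factorial * k ^ k) := by gcongr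
        _ = (2 ^ 2) ^ k * (n ^ k * k ^ k) * k.factorial := by norm_num; ring
    _ ≤ Real.exp (2 * √(n * k)) := Real.pow_div_factorial_le_exp _ (by positivity) _

theorem nat_mul_exp_neg_sqrt_le_two (n : ℕ) : n * Real.exp (-√n) ≤ 2 := by
  have h := Real.quadratic_le_exp_of_nonneg (Real.sqrt_nonneg (n : ℝ))
  rw [Real.sq_sqrt n.cast_nonneg] at h
  rw [Real.exp_neg, ← div_eq_mul_inv, div_le_iff₀ (Real.exp_pos _)]
  linarith [Real.sqrt_nonneg (n : ℝ)]

theorem sum_exp_neg_three_mul_sqrt_card_le [Fintype α] :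
    ∑ B : Finset α, Real.exp (-(3 * √(Fintype.card α * #B))) ≤ 3 := by
  set n := Fintype.card α
  have hterm (k : ℕ) :
      n.choose (k + 1) * Real.exp (-(3 * √(n * (k + 1 : ℕ)))) ≤ Real.exp (-√n) := by
    have hroot : √(n : ℝ) ≤ √(n * (k + 1 : ℕ)) :=
      Real.sqrt_le_sqrt (le_mul_of_one_le_right n.cast_nonneg (by simp))
    calc _ ≤ Real.exp (2 * √(n * (k + 1 : ℕ))) * Real.exp (-(3 * √(n * (k + 1 : ℕ)))) := by
          gcongr
          exact choose_le_exp_two_mul_sqrt n (k + 1)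
      _ ≤ Real.exp (-√n) := by
          rw [← Real.exp_add]
          gcongr
          linarith
  have hgroup := sum_powerset_apply_card (x := (univ : Finset α))
    fun k ↦ Real.exp (-(3 * √(n * k)))
  rw [powerset_univ, card_univ] at hgroup
  rw [hgroup, sum_range_succ']
  simp only [nsmul_eq_mul]
  calc _ ≤ ∑ _k ∈ range n, Real.exp (-√n) + 1 := by
        refine add_le_add (sum_le_sum fun k _ ↦ hterm k) ?_
        simp
    _ = n * Real.exp (-√n) + 1 := by simp
    _ ≤ 3 := by linarith [nat_mul_exp_neg_sqrt_le_two n]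

theorem card_powerset_filter_card_le_le_exp {R : Finset α} {D : ℕ} {t : ℝ} (hD : 1 ≤ D)
    (hDt : D ≤ t) (hR : #R ≤ t) :
    (#{B ∈ R.powerset | #B ≤ D} : ℝ) ≤ Real.exp (D * (1 + Real.log (t / D))) := by
  have hD0 : (0 : ℝ) < D := by exact_mod_cast hD
  have ht0 : 0 < t := hD0.trans_le hDt
  set r : ℝ := D / t
  have hr0 : 0 < r := by positivity
  have hr1 : r ≤ 1 := (div_le_one ht0).2 hDt
  have hweighted : (#{B ∈ R.powerset | #B ≤ D} : ℝ) * r ^ D ≤ Real.exp D :=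
    calc (#{B ∈ R.powerset | #B ≤ D} : ℝ) * r ^ D = ∑ B ∈ R.powerset with #B ≤ D, r ^ D := by simp
      _ ≤ ∑ B ∈ R.powerset with #B ≤ D, r ^ #B :=
        sum_le_sum fun B hB ↦ pow_le_pow_of_le_one hr0.le hr1 (mem_filter.1 hB).2
      _ ≤ ∑ B ∈ R.powerset, r ^ #B :=
        sum_le_sum_of_subset_of_nonneg (filter_subset _ _) fun _ _ _ ↦ by positivity
      _ = (r + 1) ^ #R := by simpa using sum_pow_mul_eq_add_pow r 1 R
      _ ≤ Real.exp r ^ #R := by gcongr; exact Real.add_one_le_exp r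
      _ = Real.exp (#R * r) := (Real.exp_nat_mul _ _).symm
      _ ≤ Real.exp (t * r) := by gcongr
      _ = Real.exp D := by rw [mul_div_cancel₀ _ ht0.ne']
  refine le_of_mul_le_mul_right (hweighted.trans_eq ?_) (pow_pos hr0 D)
  have hpow : r ^ D = Real.exp (-(D * Real.log (t / D))) := by
    rw [← mul_neg, ← Real.log_inv, inv_div, Real.exp_nat_mul, Real.exp_log hr0]
  rw [hpow, ← Real.exp_add]
  ring_nf

end Counting

section VapnikChervonenkis

variable {ι : Type*} [DecidableEq ι] {𝒜 : Finset (Finset ι)} {D : ℕ}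

theorem vcDim_singleton (A : Finset ι) : ({A} : Finset (Finset ι)).vcDim = 0 := by
  refine Nat.le_zero.1 (Finset.sup_le fun s hs ↦ ?_)
  obtain ⟨t, ht, hempty⟩ := mem_shatterer.1 hs (empty_subset s)
  obtain ⟨u, hu, hself⟩ := mem_shatterer.1 hs (Subset.refl s)
  rw [mem_singleton.1 ht] at hempty
  rw [mem_singleton.1 hu, hempty] at hself
  simp [← hself]

theorem card_image_inter_le_of_vcDim_le (h𝒜 : 𝒜.vcDim ≤ D) (R : Finset ι) :
    #(𝒜.image (R ∩ ·)) ≤ #{B ∈ R.powerset | #B ≤ D} := by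
  refine (card_le_card_shatterer _).trans (card_le_card fun B hB ↦ ?_)
  rw [mem_shatterer] at hB
  have hBR : B ⊆ R := by
    obtain ⟨u, hu, hBu⟩ := hB.exists_superset
    obtain ⟨A, -, rfl⟩ := mem_image.1 hu
    exact hBu.trans inter_subset_left
  have hshatters : 𝒜.Shatters B := by
    intro t ht
    obtain ⟨u, hu, rfl⟩ := hB ht
    obtain ⟨A, hA, rfl⟩ := mem_image.1 hu
    exact ⟨A, hA, by rw [← inter_assoc, inter_eq_left.2 hBR]⟩
  exact mem_filter.2 ⟨mem_powerset.2 hBR, hshatters.card_le_vcDim.trans h𝒜⟩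

variable [Fintype ι]

theorem exists_mem_of_many_of_forall_mul_card_le [Nonempty ι] {p : ℝ}
    {𝒟 : Finset (Finset ι)} (h𝒟 : ∀ A ∈ 𝒟, p * Fintype.card ι ≤ #A) :
    ∃ i, p * #𝒟 ≤ #{A ∈ 𝒟 | i ∈ A} := by
  have hcount : ∑ _i : ι, p * #𝒟 ≤ ∑ i : ι, (#{A ∈ 𝒟 | i ∈ A} : ℝ) :=
    calc ∑ _i : ι, p * #𝒟 = ∑ _A ∈ 𝒟, p * Fintype.card ι := by simp; ring
      _ ≤ ∑ A ∈ 𝒟, (#A : ℝ) := sum_le_sum h𝒟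
      _ = ∑ i : ι, (#{A ∈ 𝒟 | i ∈ A} : ℝ) := by
        have := sum_card_bipartiteAbove_eq_sum_card_bipartiteBelow (s := univ) (t := 𝒟)
          fun (i : ι) (A : Finset ι) ↦ i ∈ A
        simp only [bipartiteAbove, bipartiteBelow, filter_univ_mem] at this
        exact_mod_cast this.symm
  obtain ⟨i, -, hi⟩ := exists_le_of_sum_le univ_nonempty hcount
  exact ⟨i, hi⟩

/- Greedy choice: some point meets a proportion `p` of the sets not yet hit. -/
theorem exists_hitting_finset {p : ℝ} (hp0 : 0 ≤ p) (t : ℕ) {𝒟 : Finset (Finset ι)}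
    (h𝒟 : ∀ A ∈ 𝒟, p * Fintype.card ι < #A) (hcard : #𝒟 < Real.exp (p * t)) :
    ∃ R : Finset ι, #R ≤ t ∧ ∀ A ∈ 𝒟, (R ∩ A).Nonempty := by
  induction t generalizing 𝒟 with
  | zero =>
    have : 𝒟 = ∅ := by simpa using hcard
    exact ⟨∅, by simp [this]⟩
  | succ t ih =>
    obtain rfl | ⟨A₀, hA₀⟩ := 𝒟.eq_empty_or_nonempty
    · exact ⟨∅, by simp⟩
    have hnonempty : Nonempty ι := by
      have hpos : (0 : ℝ) < #A₀ := lt_of_le_of_lt (by positivity) (h𝒟 A₀ hA₀)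
      obtain ⟨i, -⟩ := card_pos.1 (Nat.cast_pos.1 hpos)
      exact ⟨i⟩
    obtain ⟨i, hi⟩ := exists_mem_of_many_of_forall_mul_card_le fun A hA ↦ (h𝒟 A hA).le
    have hremaining : (#{A ∈ 𝒟 | i ∉ A} : ℝ) < Real.exp (p * t) := by
      have hsplit : (#{A ∈ 𝒟 | i ∈ A} : ℝ) + #{A ∈ 𝒟 | i ∉ A} = #𝒟 := by
        exact_mod_cast card_filter_add_card_filter_not _
      calc (#{A ∈ 𝒟 | i ∉ A} : ℝ) ≤ (-p + 1) * #𝒟 := by linarith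
        _ ≤ Real.exp (-p) * #𝒟 := by gcongr; exact Real.add_one_le_exp _
        _ < Real.exp (-p) * Real.exp (p * (t + 1 : ℕ)) := by gcongr
        _ = Real.exp (p * t) := by rw [← Real.exp_add]; push_cast; ring_nf
    obtain ⟨R, hR, hhit⟩ := ih (fun A hA ↦ h𝒟 A (mem_filter.1 hA).1) hremaining
    refine ⟨insert i R, (card_insert_le _ _).trans (by lia), fun A hA ↦ ?_⟩
    by_cases hiA : i ∈ A
    · exact ⟨i, by simp [hiA]⟩
    · exact (hhit A (mem_filter.2 ⟨hA, hiA⟩)).mono (by gcongr; exact subset_insert _ _)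

theorem le_eight_mul_of_le_one_add_log {u q : ℝ} (hu : 0 < u) (hq : 1 ≤ q)
    (h : u ≤ 1 + Real.log (3 * q ^ 4 * u)) : u ≤ 8 * q := by
  have hexpand : Real.log (3 * q ^ 4 * u)
      = Real.log 3 + 4 * Real.log q + (Real.log 2 + Real.log (u / 2)) := by
    rw [← Real.log_mul two_ne_zero (by positivity), mul_div_cancel₀ _ two_ne_zero,
      Real.log_mul (by positivity) hu.ne', Real.log_mul three_ne_zero (by positivity), Real.log_pow]
    norm_num
  have h2 := Real.log_le_sub_one_of_pos (x := 2) two_pos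
  have h3 := Real.log_le_sub_one_of_pos (x := 3) three_pos
  have hq' := Real.log_le_sub_one_of_pos (x := q) (by positivity)
  have hu' := Real.log_le_sub_one_of_pos (x := u / 2) (by positivity)
  linarith

theorem exists_injOn_inter_of_pairwise_lt_card_symmDiff {p : ℝ} (hp0 : 0 ≤ p) {t : ℕ}
    (hcard : (#𝒜 : ℝ) ^ 2 < Real.exp (p * t))
    (hsep : (𝒜 : Set (Finset ι)).Pairwise fun A B ↦ p * Fintype.card ι < #(A ∆ B)) :
    ∃ R : Finset ι, #R ≤ t ∧ Set.InjOn (R ∩ ·) (𝒜 : Set (Finset ι)) := by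
  set 𝒟 : Finset (Finset ι) := 𝒜.offDiag.image fun P ↦ P.1 ∆ P.2
  have h𝒟 : ∀ S ∈ 𝒟, p * Fintype.card ι < #S := by
    simp only [𝒟, forall_mem_image, mem_offDiag]
    exact fun P hP ↦ hsep hP.1 hP.2.1 hP.2.2
  have hcard𝒟 : (#𝒟 : ℝ) ≤ #𝒜 ^ 2 := by
    have : #𝒟 ≤ #𝒜 * #𝒜 := card_image_le.trans (by rw [offDiag_card]; exact Nat.sub_le _ _)
    rw [sq]
    exact_mod_cast this
  obtain ⟨R, hRt, hhit⟩ := exists_hitting_finset hp0 t h𝒟 (hcard𝒟.trans_lt hcard)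
  refine ⟨R, hRt, fun A hA B hB (hAB : R ∩ A = R ∩ B) ↦ by_contra fun hne ↦ ?_⟩
  have hmeets : (R ∩ A ∆ B).Nonempty :=
    hhit _ (mem_image.2 ⟨(A, B), mem_offDiag.2 ⟨hA, hB, hne⟩, rfl⟩)
  rw [← inf_eq_inter, inf_symmDiff_distrib_left, inf_eq_inter, inf_eq_inter, hAB,
    symmDiff_self] at hmeets
  exact not_nonempty_empty hmeets

/- Haussler's packing bound, up to logarithmic sharpness: a set `R` of size `O(q⁴ log #𝒜)` meets
all the symmetric differences, so `𝒜` has as many members as traces on `R`, which the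
Sauer–Shelah lemma counts. -/
theorem card_le_exp_of_pairwise_lt_card_symmDiff {q : ℝ} (hq : 1 ≤ q) (hD : 1 ≤ D)
    (h𝒜 : 𝒜.vcDim ≤ D)
    (hsep : (𝒜 : Set (Finset ι)).Pairwise fun A B ↦ Fintype.card ι / q ^ 4 < #(A ∆ B)) :
    (#𝒜 : ℝ) ≤ Real.exp (8 * D * q) := by
  have hD1 : (1 : ℝ) ≤ D := by exact_mod_cast hD
  have hD0 : (0 : ℝ) < D := by linarith
  have hq4 : 1 ≤ q ^ 4 := one_le_pow₀ hq
  by_cases hsmall : (#𝒜 : ℝ) ≤ Real.exp D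
  · exact hsmall.trans (Real.exp_le_exp.2 (by nlinarith))
  rw [not_le] at hsmall
  have hpos : (0 : ℝ) < #𝒜 := (Real.exp_pos _).trans hsmall
  set L := Real.log #𝒜
  have hL : D < L := (Real.lt_log_iff_exp_lt hpos).2 hsmall
  have hLq : L ≤ q ^ 4 * L := le_mul_of_one_le_left (by linarith) hq4
  set t : ℕ := ⌊2 * (q ^ 4 * L)⌋₊ + 1
  have hlt : 2 * (q ^ 4 * L) < t := by
    simpa [t] using Nat.lt_floor_add_one (2 * (q ^ 4 * L))
  have htle : (t : ℝ) ≤ 3 * q ^ 4 * L := by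
    have := Nat.floor_le (show 0 ≤ 2 * (q ^ 4 * L) by linarith)
    push_cast [t]
    linarith
  have hcard : (#𝒜 : ℝ) ^ 2 < Real.exp ((q ^ 4)⁻¹ * t) := by
    rw [← Real.exp_log hpos, ← Real.exp_nat_mul, Real.exp_lt_exp, inv_mul_eq_div,
      lt_div_iff₀ (by positivity)]
    exact lt_of_eq_of_lt (by push_cast; ring) hlt
  obtain ⟨R, hRt, hinj⟩ := exists_injOn_inter_of_pairwise_lt_card_symmDiff (by positivity) hcard
    (by simpa only [inv_mul_eq_div] using hsep)
  have htrace : (#𝒜 : ℝ) ≤ Real.exp (D * (1 + Real.log (3 * q ^ 4 * L / D))) := by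
    rw [← card_image_of_injOn hinj]
    exact (Nat.cast_le.2 (card_image_inter_le_of_vcDim_le h𝒜 R)).trans
      (card_powerset_filter_card_le_le_exp hD (by linarith) ((Nat.cast_le.2 hRt).trans htle))
  have hlog : L / D ≤ 1 + Real.log (3 * q ^ 4 * (L / D)) := by
    rw [div_le_iff₀' hD0, ← mul_div_assoc]
    exact (Real.log_le_iff_le_exp hpos).2 htrace
  have hratio := le_eight_mul_of_le_one_add_log (div_pos (hD0.trans hL) hD0) hq hlog
  rw [div_le_iff₀ hD0] at hratio
  exact (Real.log_le_iff_le_exp hpos).1 (by linarith)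

theorem exists_symmDiff_net {q : ℝ} (hq : 1 ≤ q) (hD : 1 ≤ D) (h𝒜 : 𝒜.vcDim ≤ D) :
    ∃ 𝒞 : Finset (Finset ι), #𝒞 ≤ Real.exp (8 * D * q) ∧
      ∀ A ∈ 𝒜, ∃ B ∈ 𝒞, #(A ∆ B) ≤ Fintype.card ι / q ^ 4 := by
  have hcard (𝒞 : Finset (Finset ι)) (hsub : ∀ A ∈ 𝒞, A ∈ 𝒜) (hsep : (𝒞 : Set (Finset ι)).Pairwise
      fun A B ↦ ¬ (#(A ∆ B) : ℝ) ≤ Fintype.card ι / q ^ 4) : #𝒞 ≤ Real.exp (8 * D * q) :=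
    card_le_exp_of_pairwise_lt_card_symmDiff hq hD ((vcDim_mono hsub).trans h𝒜)
      (by simpa only [not_le] using hsep)
  obtain ⟨𝒞, hsub, hsep, hcover⟩ := exists_separated_cover (P := (· ∈ 𝒜))
    (r := fun A B : Finset ι ↦ (#(A ∆ B) : ℝ) ≤ Fintype.card ι / q ^ 4)
    (fun A ↦ by rw [symmDiff_self, bot_eq_empty, card_empty, Nat.cast_zero]; positivity)
    (fun A B h ↦ by rwa [symmDiff_comm])
    (fun 𝒞 hsub hsep ↦ Nat.le_floor (hcard 𝒞 hsub hsep))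
  exact ⟨𝒞, hcard 𝒞 hsub hsep, hcover⟩

end VapnikChervonenkis

section Halfspaces

variable {E : Type*} [NormedAddCommGroup E] [InnerProductSpace ℝ E]
  {ι : Type*} {x : ι → E} {y : ι → ℝ}

theorem sum_mul_le_zero_of_forall_lt_inner_iff_pos {S : Finset ι} {g : ι → ℝ}
    (hg : ∑ i ∈ S, g i • x i = 0) {b : E} (hb : ∀ i ∈ S, y i < ⟪x i, b⟫ ↔ 0 < g i) :
    ∑ i ∈ S, g i * y i ≤ 0 ∧ ((∃ i ∈ S, 0 < g i) → ∑ i ∈ S, g i * y i < 0) := by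
  have hsum : ∑ i ∈ S, g i * y i = -∑ i ∈ S, g i * (⟪x i, b⟫ - y i) := by
    have : ∑ i ∈ S, g i * ⟪x i, b⟫ = 0 := by
      simp_rw [← real_inner_smul_left, ← sum_inner, hg, inner_zero_left]
    simp_rw [mul_sub, sum_sub_distrib, this, zero_sub, neg_neg]
  have hterm : ∀ i ∈ S, 0 ≤ g i * (⟪x i, b⟫ - y i) := fun i hi ↦ by
    rcases lt_or_ge 0 (g i) with hpos | hneg
    · exact mul_nonneg hpos.le (sub_nonneg.2 ((hb i hi).2 hpos).le)
    · have := mt (hb i hi).1 hneg.not_gt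
      exact mul_nonneg_of_nonpos_of_nonpos hneg (sub_nonpos.2 (not_lt.1 this))
  rw [hsum, neg_nonpos, neg_lt_zero]
  exact ⟨sum_nonneg hterm, fun ⟨i, hi, hpos⟩ ↦
    sum_pos' hterm ⟨i, hi, mul_pos hpos (sub_pos.2 ((hb i hi).2 hpos))⟩⟩

variable [Fintype ι]

variable (x y) in
/-- The indices of the sample points `(x i, y i) ∈ E × ℝ` lying strictly below the graph of the
linear functional `⟪·, b⟫`. -/
def belowHyperplane (b : E) : Finset ι := {i | y i < ⟪x i, b⟫}

open Classical in
variable (x y) in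
/-- The family of all subsets of the sample `(x i, y i)` cut out by graphs of linear functionals,
regarded as sets of indices. -/
def halfspaceTraces : Finset (Finset ι) := {A | ∃ b, belowHyperplane x y b = A}

theorem belowHyperplane_mem_halfspaceTraces (b : E) :
    belowHyperplane x y b ∈ halfspaceTraces x y := by
  simp [halfspaceTraces]

theorem vcDim_halfspaceTraces_le [DecidableEq ι] [FiniteDimensional ℝ E] :
    (halfspaceTraces x y).vcDim ≤ finrank ℝ E := by
  refine Finset.sup_le fun S hS ↦ ?_
  rw [mem_shatterer] at hS
  by_contra! hcard
  have hdep : ¬ LinearIndepOn ℝ x (S : Set ι) := fun h ↦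
    hcard.not_ge (by simpa using LinearIndependent.fintype_card_le_finrank h)
  rw [linearIndepOn_finset_iff] at hdep
  push Not at hdep
  obtain ⟨g, hg, i, hi, hgi⟩ := hdep
  have hcut (g : ι → ℝ) : ∃ b, ∀ i ∈ S, y i < ⟪x i, b⟫ ↔ 0 < g i := by
    obtain ⟨A, hA, hSA⟩ := hS (filter_subset (fun i ↦ 0 < g i) S)
    obtain ⟨b, rfl⟩ : ∃ b, belowHyperplane x y b = A := by simpa [halfspaceTraces] using hA
    refine ⟨b, fun i hi ↦ ?_⟩
    simpa [belowHyperplane, hi] using Finset.ext_iff.1 hSA i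
  obtain ⟨b, hb⟩ := hcut g
  obtain ⟨b', hb'⟩ := hcut (-g)
  have hpos := sum_mul_le_zero_of_forall_lt_inner_iff_pos hg hb
  have hneg := sum_mul_le_zero_of_forall_lt_inner_iff_pos (by simpa using hg) hb'
  simp only [Pi.neg_apply, neg_mul, sum_neg_distrib, neg_nonpos, neg_lt_zero, neg_pos] at hneg
  rcases hgi.lt_or_gt with h | h
  · exact (hneg.2 ⟨i, hi, h⟩).not_ge hpos.1
  · exact (hpos.2 ⟨i, hi, h⟩).not_ge hneg.1

end Halfspaces

section RademacherSigns

/-- The sign `±1` encoded by a Boolean. -/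
def boolSign (b : Bool) : ℝ := if b then 1 else -1

theorem measurable_boolSign : Measurable boolSign := measurable_from_top

theorem boolSign_sq (b : Bool) : boolSign b ^ 2 = 1 := by cases b <;> norm_num [boolSign]

variable {ι : Type*} [Fintype ι]

variable (ι) in
/-- The law of a family of independent uniform signs indexed by `ι` (a Rademacher family), each
sign being encoded by a Boolean. -/
def rademacher : Measure (ι → Bool) := Measure.pi fun _ ↦ (PMF.uniformOfFintype Bool).toMeasure

instance : IsProbabilityMeasure (rademacher ι) := by unfold rademacher; infer_instance

theorem hasSubgaussianMGF_boolSign (i : ι) :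
    HasSubgaussianMGF (fun ε : ι → Bool ↦ boolSign (ε i)) 1 (rademacher ι) := by
  have hmean : ∫ ε : ι → Bool, boolSign (ε i) ∂rademacher ι = 0 := by
    refine (integral_comp_eval measurable_boolSign.aestronglyMeasurable).trans ?_
    rw [PMF.integral_eq_sum]
    simp [boolSign]
  have hrange : ∀ ε : ι → Bool, boolSign (ε i) ∈ Set.Icc (-1) 1 := fun ε ↦ by
    cases h : ε i <;> norm_num [boolSign]
  have hparam : (‖(1 : ℝ) - -1‖₊ / 2) ^ 2 = 1 := by
    rw [sub_neg_eq_add, one_add_one_eq_two, Real.nnnorm_ofNat, div_self two_ne_zero, one_pow]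
  rw [← hparam]
  exact hasSubgaussianMGF_of_mem_Icc_of_integral_eq_zero
    (measurable_boolSign.comp (measurable_pi_apply i)).aemeasurable
    (Filter.Eventually.of_forall hrange) hmean

theorem iIndepFun_boolSign : iIndepFun (fun i (ε : ι → Bool) ↦ boolSign (ε i)) (rademacher ι) :=
  iIndepFun_pi fun _ ↦ measurable_boolSign.aemeasurable

theorem hasSubgaussianMGF_sum_boolSign_mul {s : Finset ι} {a : ι → ℝ} {V : ℝ≥0}
    (ha : ∑ i ∈ s, a i ^ 2 ≤ V) :
    HasSubgaussianMGF (fun ε ↦ ∑ i ∈ s, a i * boolSign (ε i)) V (rademacher ι) := by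
  have hsum := HasSubgaussianMGF.sum_of_iIndepFun (s := s)
    (iIndepFun_boolSign.comp (fun i ↦ (a i * ·)) fun i ↦ measurable_const_mul (a i))
    fun i _ ↦ (hasSubgaussianMGF_boolSign i).const_mul (a i)
  refine hasSubgaussianMGF_of_le hsum ?_
  rw [← NNReal.coe_le_coe, NNReal.coe_sum]
  calc ∑ i ∈ s, a i ^ 2 * ((1 : ℝ≥0) : ℝ) ≤ V := by simpa using ha

variable {E : Type*} [NormedAddCommGroup E] [InnerProductSpace ℝ E]

theorem norm_le_two_mul_of_forall_abs_inner_le {N : Finset E}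
    (hcover : ∀ v : E, ‖v‖ ≤ 1 → ∃ w ∈ N, ‖v - w‖ ≤ 1 / 2) {z : E} {M : ℝ}
    (hM : ∀ w ∈ N, |⟪z, w⟫| ≤ M) : ‖z‖ ≤ 2 * M := by
  rw [← innerSL_apply_norm ℝ z]
  exact opNorm_le_two_mul_of_half_net hcover hM

theorem measureReal_lt_norm_sum_boolSign_smul_le [FiniteDimensional ℝ E] {s : Finset ι}
    {u : ι → E} {V : ℝ≥0} (hV : 0 < V) (hu : ∀ v, ∑ i ∈ s, ⟪u i, v⟫ ^ 2 ≤ V * ‖v‖ ^ 2)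
    {t : ℝ} (ht : 0 ≤ t) :
    (rademacher ι).real {ε | 2 * √(2 * V * t) < ‖∑ i ∈ s, boolSign (ε i) • u i‖}
      ≤ 2 * Real.exp (2 * finrank ℝ E - t) := by
  obtain ⟨N, hN, hball, hcover⟩ := exists_half_net_closedBall E
  have hnet : {ε : ι → Bool | 2 * √(2 * V * t) < ‖∑ i ∈ s, boolSign (ε i) • u i‖}
      ⊆ ⋃ w ∈ N, {ε | √(2 * V * t) < |∑ i ∈ s, ⟪u i, w⟫ * boolSign (ε i)|} := fun ε hε ↦ by
    by_contra hcon
    simp only [Set.mem_iUnion₂, Set.mem_ofPred_eq, not_exists, not_lt] at hcon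
    refine (norm_le_two_mul_of_forall_abs_inner_le hcover fun w hw ↦ ?_).not_gt hε
    simpa only [sum_inner, real_inner_smul_left, mul_comm] using hcon w hw
  have htail : ∀ w ∈ N, (rademacher ι).real
      {ε | √(2 * V * t) < |∑ i ∈ s, ⟪u i, w⟫ * boolSign (ε i)|} ≤ 2 * Real.exp (-t) := by
    refine fun w hw ↦
      measureReal_sqrt_two_mul_lt_abs_le (hasSubgaussianMGF_sum_boolSign_mul ?_) hV ht
    calc ∑ i ∈ s, ⟪u i, w⟫ ^ 2 ≤ V * ‖w‖ ^ 2 := hu w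
      _ ≤ V * 1 ^ 2 := by gcongr; exact hball w hw
      _ = V := by rw [one_pow, mul_one]
  calc _ ≤ ∑ w ∈ N, (rademacher ι).real
        {ε | √(2 * V * t) < |∑ i ∈ s, ⟪u i, w⟫ * boolSign (ε i)|} :=
      (measureReal_mono hnet (measure_ne_top _ _)).trans (measureReal_biUnion_finset_le _ _)
    _ ≤ #N * (2 * Real.exp (-t)) := by
      rw [← nsmul_eq_mul]
      exact sum_le_card_nsmul _ _ _ htail
    _ ≤ Real.exp (2 * finrank ℝ E) * (2 * Real.exp (-t)) := by
      gcongr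
      exact (Nat.cast_le.2 hN).trans (by simpa using five_pow_le_exp_two_mul _)
    _ = 2 * Real.exp (2 * finrank ℝ E - t) := by rw [sub_eq_add_neg, Real.exp_add]; ring

end RademacherSigns

section GramBound

variable {E : Type*} [NormedAddCommGroup E] [InnerProductSpace ℝ E] {ι : Type*}

theorem norm_sum_smul_le {s : Finset ι} {u : ι → E} {V : ℝ≥0}
    (hu : ∀ v, ∑ i ∈ s, ⟪u i, v⟫ ^ 2 ≤ V * ‖v‖ ^ 2) (a : ι → ℝ) :
    ‖∑ i ∈ s, a i • u i‖ ^ 2 ≤ (∑ i ∈ s, a i ^ 2) * V := by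
  set z := ∑ i ∈ s, a i • u i
  rcases (norm_nonneg z).eq_or_lt' with hz | hz
  · rw [hz, zero_pow two_ne_zero]
    positivity
  have hself : ‖z‖ ^ 2 = ∑ i ∈ s, a i * ⟪u i, z⟫ := by
    simp_rw [← real_inner_self_eq_norm_sq, ← real_inner_smul_left, ← sum_inner, z]
  have hCS := sum_mul_sq_le_sq_mul_sq s a fun i ↦ ⟪u i, z⟫
  refine le_of_mul_le_mul_right (a := ‖z‖ ^ 2) ?_ (by positivity)
  calc ‖z‖ ^ 2 * ‖z‖ ^ 2 ≤ (∑ i ∈ s, a i ^ 2) * ∑ i ∈ s, ⟪u i, z⟫ ^ 2 := by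
        rw [← sq, hself]; exact hCS
    _ ≤ (∑ i ∈ s, a i ^ 2) * (V * ‖z‖ ^ 2) := by gcongr; exact hu z
    _ = (∑ i ∈ s, a i ^ 2) * V * ‖z‖ ^ 2 := by ring

theorem sum_inner_sq_le_of_half_net {N : Finset E}
    (hcover : ∀ v : E, ‖v‖ ≤ 1 → ∃ w ∈ N, ‖v - w‖ ≤ 1 / 2) {B : Finset ι} {x : ι → E} {V : ℝ≥0}
    (hN : ∀ w ∈ N, ∑ i ∈ B, ⟪x i, w⟫ ^ 2 ≤ V) (v : E) :
    ∑ i ∈ B, ⟪x i, v⟫ ^ 2 ≤ 4 * V * ‖v‖ ^ 2 := by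
  let T : E →L[ℝ] EuclideanSpace ℝ B :=
    (PiLp.continuousLinearEquiv 2 ℝ fun _ : B ↦ ℝ).symm ∘L
      ContinuousLinearMap.pi fun i : B ↦ innerSL ℝ (x i)
  have hT (v : E) : ‖T v‖ ^ 2 = ∑ i ∈ B, ⟪x i, v⟫ ^ 2 := by
    rw [EuclideanSpace.norm_sq_eq, ← sum_coe_sort B fun i ↦ ⟪x i, v⟫ ^ 2]
    simp [T]
  have hnorm : ‖T‖ ≤ 2 * √V := opNorm_le_two_mul_of_half_net hcover fun w hw ↦
    Real.le_sqrt_of_sq_le ((hT w).trans_le (hN w hw))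
  calc ∑ i ∈ B, ⟪x i, v⟫ ^ 2 = ‖T v‖ ^ 2 := (hT v).symm
    _ ≤ (2 * √V * ‖v‖) ^ 2 := by gcongr; exact T.le_of_opNorm_le hnorm v
    _ = 4 * V * ‖v‖ ^ 2 := by rw [mul_pow, mul_pow, Real.sq_sqrt V.coe_nonneg]; norm_num

variable [Fintype ι]

/-- Uniform control of the partial Gram operators `∑ i ∈ B, x i ⊗ x i` of a sample, at the scale
`√(n |B|) + d` that holds with high probability for sub-Gaussian samples of size `n` in
dimension `d`. -/
def GramBound (H : ℝ≥0) (x : ι → E) : Prop :=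
  ∀ (B : Finset ι) (v : E),
    ∑ i ∈ B, ⟪x i, v⟫ ^ 2 ≤ H * (√(Fintype.card ι * #B) + finrank ℝ E) * ‖v‖ ^ 2

theorem card_le_sqrt_card_univ_mul_card (B : Finset ι) : (#B : ℝ) ≤ √(Fintype.card ι * #B) := by
  have : (#B : ℝ) ≤ Fintype.card ι := by exact_mod_cast card_le_univ B
  exact Real.le_sqrt_of_sq_le (by rw [sq]; gcongr)

variable [FiniteDimensional ℝ E] [MeasurableSpace E] [BorelSpace E]
  {Ω : Type*} {mΩ : MeasurableSpace Ω} {μ : Measure Ω} {X : ι → Ω → E} {c : ℝ≥0}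

theorem measureReal_lt_sum_inner_sq_le (hmeas : ∀ i, Measurable (X i)) (hindep : iIndepFun X μ)
    (hX : ∀ i v, HasSubgaussianMGF (fun ω ↦ ⟪X i ω, v⟫) (c * ‖v‖₊ ^ 2) μ) (hc : 0 < c)
    (B : Finset ι) {w : E} (hw : ‖w‖ ≤ 1) :
    μ.real {ω | 36 * c * (√(Fintype.card ι * #B) + finrank ℝ E) < ∑ i ∈ B, ⟪X i ω, w⟫ ^ 2}
      ≤ Real.exp (-(3 * √(Fintype.card ι * #B)) - 9 * finrank ℝ E) := by
  have := hindep.isProbabilityMeasure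
  set s : ℝ := #B + 3 * √(Fintype.card ι * #B) + 9 * finrank ℝ E
  have hs : s ≤ 9 * (√(Fintype.card ι * #B) + finrank ℝ E) := by
    linarith [card_le_sqrt_card_univ_mul_card B, Real.sqrt_nonneg (Fintype.card ι * #B)]
  have hsub (i : ι) : HasSubgaussianMGF (fun ω ↦ ⟪X i ω, w⟫) c μ :=
    hasSubgaussianMGF_of_le (hX i w) (mul_le_of_le_one_right' (pow_le_one₀ (by positivity) hw))
  have htail := measureReal_four_mul_lt_sum_sq_le (fun i ↦ (hmeas i).inner_const)
    (hindep.comp (fun _ z ↦ ⟪z, w⟫) fun _ ↦ measurable_id.inner_const) hsub hc B s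
  calc _ ≤ μ.real {ω | 4 * c * s < ∑ i ∈ B, ⟪X i ω, w⟫ ^ 2} := by
        refine measureReal_mono fun ω hω ↦ (lt_of_le_of_lt ?_ hω : 4 * c * s < _)
        calc 4 * c * s ≤ 4 * c * (9 * (√(Fintype.card ι * #B) + finrank ℝ E)) := by gcongr
          _ = 36 * c * (√(Fintype.card ι * #B) + finrank ℝ E) := by ring
    _ ≤ 2 ^ #B * Real.exp (-s) := htail
    _ ≤ Real.exp 1 ^ #B * Real.exp (-s) := by
        gcongr
        linarith [Real.exp_one_gt_d9]
    _ = Real.exp (-(3 * √(Fintype.card ι * #B)) - 9 * finrank ℝ E) := by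
        rw [← Real.exp_nat_mul, ← Real.exp_add]
        congr 1
        ring

theorem measureReal_not_gramBound_le (hmeas : ∀ i, Measurable (X i)) (hindep : iIndepFun X μ)
    (hX : ∀ i v, HasSubgaussianMGF (fun ω ↦ ⟪X i ω, v⟫) (c * ‖v‖₊ ^ 2) μ) (hc : 0 < c) :
    μ.real {ω | ¬ GramBound (144 * c) fun i ↦ X i ω} ≤ 3 * Real.exp (-(7 * finrank ℝ E)) := by
  have := hindep.isProbabilityMeasure
  obtain ⟨N, hN, hball, hcover⟩ := exists_half_net_closedBall E
  set bad : Finset ι → E → Set Ω := fun B w ↦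
    {ω | 36 * c * (√(Fintype.card ι * #B) + finrank ℝ E) < ∑ i ∈ B, ⟪X i ω, w⟫ ^ 2}
  have hsubset : {ω | ¬ GramBound (144 * c) fun i ↦ X i ω}
      ⊆ ⋃ B ∈ (univ : Finset (Finset ι)), ⋃ w ∈ N, bad B w := fun ω hω ↦ by
    by_contra hcon
    simp only [Set.mem_iUnion₂, bad, Set.mem_ofPred_eq, not_exists, not_lt] at hcon
    refine hω fun B v ↦ ?_
    have := sum_inner_sq_le_of_half_net hcover
      (V := 36 * c * (NNReal.sqrt (Fintype.card ι * #B) + finrank ℝ E))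
      (by simpa using hcon B (mem_univ B)) v
    push_cast at this ⊢
    linarith
  calc _ ≤ ∑ B : Finset ι, ∑ w ∈ N, μ.real (bad B w) :=
      (measureReal_mono hsubset (measure_ne_top _ _)).trans
        ((measureReal_biUnion_finset_le _ _).trans
          (sum_le_sum fun B _ ↦ measureReal_biUnion_finset_le _ _))
    _ ≤ ∑ B : Finset ι, #N •
        Real.exp (-(3 * √(Fintype.card ι * #B)) - 9 * finrank ℝ E) :=
      sum_le_sum fun B _ ↦ sum_le_card_nsmul _ _ _ fun w hw ↦
        measureReal_lt_sum_inner_sq_le hmeas hindep hX hc B (hball w hw)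
    _ = #N * Real.exp (-(9 * finrank ℝ E)) *
        ∑ B : Finset ι, Real.exp (-(3 * √(Fintype.card ι * #B))) := by
      simp_rw [nsmul_eq_mul, sub_eq_add_neg, Real.exp_add, mul_sum]
      exact sum_congr rfl fun _ _ ↦ by ring
    _ ≤ Real.exp (2 * finrank ℝ E) * Real.exp (-(9 * finrank ℝ E)) * 3 := by
      gcongr
      · exact (Nat.cast_le.2 hN).trans (by simpa using five_pow_le_exp_two_mul _)
      · exact sum_exp_neg_three_mul_sqrt_card_le
    _ = 3 * Real.exp (-(7 * finrank ℝ E)) := by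
      rw [← Real.exp_add, mul_comm]
      ring_nf

end GramBound

section Chaining

theorem sum_one_half_pow_succ_le_one (K : ℕ) : ∑ k ∈ range K, (1 / 2 : ℝ) ^ (k + 1) ≤ 1 := by
  simp_rw [pow_succ, ← sum_mul]
  linarith [sum_geometric_two_le K]

theorem norm_sub_le_two_mul_of_forall_norm_sub_le {F : Type*} [SeminormedAddCommGroup F]
    {S : ℕ → F} {a : ℝ} (ha : 0 ≤ a) {K : ℕ}
    (hS : ∀ k < K, ‖S (k + 1) - S k‖ ≤ a / 2 ^ k) : ‖S K - S 0‖ ≤ 2 * a := by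
  calc ‖S K - S 0‖ = ‖∑ k ∈ range K, (S (k + 1) - S k)‖ := by rw [sum_range_sub]
    _ ≤ ∑ k ∈ range K, a * (1 / 2) ^ k := norm_sum_le_of_le _ fun k hk ↦
      (hS k (mem_range.1 hk)).trans_eq (by rw [one_div, inv_pow, div_eq_mul_inv])
    _ ≤ 2 * a := by
      rw [← mul_sum, mul_comm]
      gcongr
      exact sum_geometric_two_le K

variable {E : Type*} [NormedAddCommGroup E] [InnerProductSpace ℝ E] {ι : Type*} {x : ι → E}

/-- The signed partial sum `∑ i ∈ A, ε i • x i`, where the signs `ε` are encoded by Booleans. -/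
def signedSum (x : ι → E) (ε : ι → Bool) (A : Finset ι) : E := ∑ i ∈ A, boolSign (ε i) • x i

variable [DecidableEq ι]

theorem signedSum_sub (ε : ι → Bool) (A B : Finset ι) :
    signedSum x ε A - signedSum x ε B
      = ∑ i ∈ A ∆ B, boolSign (ε i) • if i ∈ A then x i else -x i := by
  have hAB : ∑ i ∈ A \ B, boolSign (ε i) • (if i ∈ A then x i else -x i)
      = ∑ i ∈ A \ B, boolSign (ε i) • x i :=
    sum_congr rfl fun i hi ↦ by rw [if_pos (mem_sdiff.1 hi).1]
  have hBA : ∑ i ∈ B \ A, boolSign (ε i) • (if i ∈ A then x i else -x i)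
      = -∑ i ∈ B \ A, boolSign (ε i) • x i := by
    rw [← sum_neg_distrib]
    exact sum_congr rfl fun i hi ↦ by rw [if_neg (mem_sdiff.1 hi).2, smul_neg]
  rw [symmDiff_def, sup_eq_union, sum_union disjoint_sdiff_sdiff, hAB, hBA, ← sub_eq_add_neg,
    sum_sdiff_sub_sum_sdiff, signedSum, signedSum]

variable [Fintype ι] {H : ℝ≥0}

theorem GramBound.sum_inner_ite_neg_sq_le (hx : GramBound H x) (A B : Finset ι) (v : E) :
    ∑ i ∈ B, ⟪if i ∈ A then x i else -x i, v⟫ ^ 2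
      ≤ H * (√(Fintype.card ι * #B) + finrank ℝ E) * ‖v‖ ^ 2 := by
  refine le_of_eq_of_le (sum_congr rfl fun i _ ↦ ?_) (hx B v)
  split_ifs
  · rfl
  · rw [inner_neg_left, neg_sq]

theorem GramBound.norm_signedSum_sub_le (hx : GramBound H x) (ε : ι → Bool) {A B : Finset ι}
    (hAB : (#(A ∆ B) : ℝ) ≤ finrank ℝ E) :
    ‖signedSum x ε A - signedSum x ε B‖ ≤ 2 * √(H * Fintype.card ι * finrank ℝ E) := by
  set n := Fintype.card ι
  set d := finrank ℝ E
  set m := #(A ∆ B)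
  have hmn : (m : ℝ) ≤ n := by exact_mod_cast card_le_univ _
  have hsqrt : √(n * m) ≤ n := (Real.sqrt_le_left n.cast_nonneg).2 (by rw [sq]; gcongr)
  have hnorm := norm_sum_smul_le (V := H * (NNReal.sqrt (n * m) + d))
    (by simpa using hx.sum_inner_ite_neg_sq_le A (A ∆ B)) fun i ↦ boolSign (ε i)
  have hsq : ‖signedSum x ε A - signedSum x ε B‖ ^ 2
      ≤ (2 * √(H * n * d)) ^ 2 := by
    calc _ ≤ m * (H * (√(n * m) + d)) := by simpa [signedSum_sub, boolSign_sq] using hnorm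
      _ ≤ d * (H * n) + n * (H * d) := by
        rw [mul_add (H : ℝ), mul_add]
        gcongr
      _ ≤ (2 * √(H * n * d)) ^ 2 := by
        rw [mul_pow, Real.sq_sqrt (by positivity)]
        linarith [show 0 ≤ H * n * (d : ℝ) by positivity]
  exact (sq_le_sq₀ (norm_nonneg _) (by positivity)).1 hsq

theorem GramBound.measureReal_lt_norm_signedSum_sub_le [FiniteDimensional ℝ E]
    (hx : GramBound H x) {A B : Finset ι} {V : ℝ≥0} (hV : 0 < V)
    (hAB : H * (√(Fintype.card ι * #(A ∆ B)) + finrank ℝ E) ≤ V) {t : ℝ} (ht : 0 ≤ t) :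
    (rademacher ι).real {ε | 2 * √(2 * V * t) < ‖signedSum x ε A - signedSum x ε B‖}
      ≤ 2 * Real.exp (2 * finrank ℝ E - t) := by
  simp_rw [signedSum_sub]
  exact measureReal_lt_norm_sum_boolSign_smul_le hV
    (fun v ↦ (hx.sum_inner_ite_neg_sq_le A (A ∆ B) v).trans (by gcongr)) ht

variable {𝒜 : Finset (Finset ι)}

theorem exists_successive_approximations {D : ℕ} (hD : 1 ≤ D) (h𝒜 : 𝒜.vcDim ≤ D) :
    ∃ π : ℕ → Finset ι → Finset ι, (∀ A, π 0 A = ∅) ∧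
      (∀ k, #(𝒜.image (π k)) ≤ Real.exp (8 * D * 4 ^ k)) ∧
      ∀ k, ∀ A ∈ 𝒜, #(A ∆ π k A) ≤ (Fintype.card ι : ℝ) / 256 ^ k := by
  have hnet (k : ℕ) : ∃ π : Finset ι → Finset ι, #(𝒜.image π) ≤ Real.exp (8 * D * 4 ^ k) ∧
      ∀ A ∈ 𝒜, #(A ∆ π A) ≤ (Fintype.card ι : ℝ) / 256 ^ k := by
    obtain ⟨𝒞, hcard, hcover⟩ :=
      exists_symmDiff_net (q := 4 ^ k) (one_le_pow₀ (by norm_num)) hD h𝒜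
    choose! π hmem hclose using hcover
    refine ⟨π, (Nat.cast_le.2 (card_le_card (image_subset_iff.2 hmem))).trans hcard,
      fun A hA ↦ (hclose A hA).trans_eq ?_⟩
    rw [pow_right_comm]
    norm_num
  choose π hcard hclose using hnet
  refine ⟨fun k ↦ if k = 0 then fun _ ↦ ∅ else π k, fun A ↦ by simp, fun k ↦ ?_, fun k A hA ↦ ?_⟩
  · rcases eq_or_ne k 0 with rfl | hk
    · have : #(𝒜.image fun _ ↦ (∅ : Finset ι)) ≤ 1 :=
        card_le_one.2 (by simp)
      exact (Nat.cast_le.2 this).trans (by simp)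
    · simpa [hk] using hcard k
  · rcases eq_or_ne k 0 with rfl | hk
    · simpa [← bot_eq_empty] using card_le_univ A
    · simpa [hk] using hclose k A hA

theorem exists_forall_lt_pow_mul_le {b d : ℕ} (hb : 1 < b) (hd : 0 < d) (n : ℕ) :
    ∃ K, (∀ k < K, b ^ k * d ≤ n) ∧ n < b ^ K * d := by
  classical
  have hex : ∃ K, n < b ^ K * d :=
    ⟨n, (Nat.lt_pow_self hb).trans_le (Nat.le_mul_of_pos_right _ hd)⟩
  exact ⟨Nat.find hex, fun k hk ↦ not_lt.1 (Nat.find_min hex hk), Nat.find_spec hex⟩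

theorem GramBound.measureReal_link_le [FiniteDimensional ℝ E] (hx : GramBound H x) (hH : 0 < H)
    {k : ℕ} (hd : 0 < finrank ℝ E) (hk : 256 ^ k * finrank ℝ E ≤ Fintype.card ι)
    {A B : Finset ι} (hAB : #(A ∆ B) ≤ 2 * ((Fintype.card ι : ℝ) / 256 ^ k)) :
    (rademacher ι).real {ε | 36 * √(H * Fintype.card ι * finrank ℝ E) / 2 ^ k
        < ‖signedSum x ε A - signedSum x ε B‖}
      ≤ 2 * Real.exp (2 * finrank ℝ E - 50 * (4 ^ k * finrank ℝ E)) := by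
  set n := Fintype.card ι
  set d := finrank ℝ E
  have h4 : (4 : ℝ) ^ k = (2 ^ k) ^ 2 := by rw [pow_right_comm]; norm_num
  have h16 : (16 : ℝ) ^ k = (2 ^ k) ^ 4 := by rw [pow_right_comm]; norm_num
  have h256 : (256 : ℝ) ^ k = (16 ^ k) ^ 2 := by rw [pow_right_comm]; norm_num
  have hn : 0 < n := (Nat.mul_pos (by positivity) hd).trans_le hk
  have hdn : (d : ℝ) ≤ n / 16 ^ k := by
    rw [le_div_iff₀' (by positivity)]
    calc (16 : ℝ) ^ k * d ≤ 256 ^ k * d := by gcongr; norm_num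
      _ ≤ n := by exact_mod_cast hk
  have hsqrt : √(n * #(A ∆ B)) ≤ 2 * (n / 16 ^ k) := by
    refine Real.sqrt_le_iff.2 ⟨by positivity, ?_⟩
    calc (n : ℝ) * #(A ∆ B) ≤ n * (2 * (n / 256 ^ k)) := by gcongr
      _ = 2 * (n / 16 ^ k) ^ 2 := by rw [h256]; ring
      _ ≤ (2 * (n / 16 ^ k)) ^ 2 := by nlinarith [sq_nonneg ((n : ℝ) / 16 ^ k)]
  have hthreshold : 2 * √(2 * (H * (3 * (n / 16 ^ k))) * (50 * (4 ^ k * d)))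
      ≤ 36 * √(H * n * d) / 2 ^ k := by
    rw [show 36 * √(H * n * d) / 2 ^ k = 2 * (18 * √(H * n * d) / 2 ^ k) by ring]
    gcongr
    refine Real.sqrt_le_iff.2 ⟨by positivity, ?_⟩
    rw [div_pow, mul_pow, Real.sq_sqrt (by positivity), h16, h4, le_div_iff₀ (by positivity)]
    field_simp
    norm_num
  refine (measureReal_mono fun ε hε ↦ (hthreshold.trans_lt hε : _ < _)).trans
    (hx.measureReal_lt_norm_signedSum_sub_le (V := H * (3 * (n / 16 ^ k))) (by positivity) ?_
      (by positivity))
  push_cast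
  gcongr
  linarith

theorem exp_mul_two_mul_exp_le (k : ℕ) {d : ℕ} (hd : 0 < d) :
    Real.exp (40 * (4 ^ k * d)) * (2 * Real.exp (2 * d - 50 * (4 ^ k * d)))
      ≤ Real.exp (-(5 * d)) * (1 / 2) ^ (k + 1) := by
  have hd1 : (1 : ℝ) ≤ d := by exact_mod_cast hd
  have hk4 : (k + 1 : ℝ) ≤ 4 ^ k := by
    exact_mod_cast (Nat.lt_pow_self (by norm_num : 1 < 4) : k < 4 ^ k)
  calc _ = Real.exp (2 * d - 10 * (4 ^ k * d) + Real.log 2) := by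
        rw [Real.exp_add, Real.exp_log two_pos, mul_left_comm, ← Real.exp_add, mul_comm]
        ring_nf
    _ ≤ Real.exp (-(5 * d) + (k + 1 : ℕ) * Real.log (1 / 2)) := by
      have hlog : (k + 2) * Real.log 2 ≤ k + 2 :=
        mul_le_of_le_one_right (by positivity) (by linarith [Real.log_two_lt_d9])
      have hd4 : (d : ℝ) ≤ 4 ^ k * d := le_mul_of_one_le_left (by positivity) (by linarith)
      have h4d : (4 : ℝ) ^ k ≤ 4 ^ k * d := le_mul_of_one_le_right (by positivity) hd1
      rw [one_div, Real.log_inv, Real.exp_le_exp]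
      push_cast
      linarith
    _ = Real.exp (-(5 * d)) * (1 / 2) ^ (k + 1) := by
      rw [Real.exp_add, Real.exp_nat_mul, Real.exp_log (by norm_num)]

theorem GramBound.measureReal_exists_link_le [FiniteDimensional ℝ E] (hx : GramBound H x)
    (hH : 0 < H) {k : ℕ} (hd : 0 < finrank ℝ E) (hk : 256 ^ k * finrank ℝ E ≤ Fintype.card ι)
    {π π' : Finset ι → Finset ι}
    (hcard : (#(𝒜.image π) * #(𝒜.image π') : ℝ) ≤ Real.exp (40 * (4 ^ k * finrank ℝ E)))
    (hclose : ∀ A ∈ 𝒜, #(π A ∆ π' A) ≤ 2 * ((Fintype.card ι : ℝ) / 256 ^ k)) :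
    (rademacher ι).real {ε | ∃ A ∈ 𝒜, 36 * √(H * Fintype.card ι * finrank ℝ E) / 2 ^ k
        < ‖signedSum x ε (π A) - signedSum x ε (π' A)‖}
      ≤ Real.exp (-(5 * finrank ℝ E)) * (1 / 2) ^ (k + 1) := by
  set n := Fintype.card ι
  set d := finrank ℝ E
  set pairs := 𝒜.image fun A ↦ (π A, π' A)
  set link : Finset ι × Finset ι → Set (ι → Bool) := fun P ↦
    {ε | 36 * √(H * n * d) / 2 ^ k < ‖signedSum x ε P.1 - signedSum x ε P.2‖}
  have hpairs : (#pairs : ℝ) ≤ Real.exp (40 * (4 ^ k * d)) := by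
    have : #pairs ≤ #(𝒜.image π ×ˢ 𝒜.image π') := card_le_card <| image_subset_iff.2 fun A hA ↦
      mem_product.2 ⟨mem_image_of_mem π hA, mem_image_of_mem π' hA⟩
    rw [card_product] at this
    exact le_trans (by exact_mod_cast this) hcard
  have hsubset : {ε | ∃ A ∈ 𝒜, 36 * √(H * n * d) / 2 ^ k
      < ‖signedSum x ε (π A) - signedSum x ε (π' A)‖} ⊆ ⋃ P ∈ pairs, link P := by
    rintro ε ⟨A, hA, hε⟩
    exact Set.mem_iUnion₂.2 ⟨_, mem_image_of_mem _ hA, hε⟩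
  calc _ ≤ ∑ P ∈ pairs, (rademacher ι).real (link P) :=
      (measureReal_mono hsubset (measure_ne_top _ _)).trans (measureReal_biUnion_finset_le _ _)
    _ ≤ #pairs • (2 * Real.exp (2 * d - 50 * (4 ^ k * d))) :=
      sum_le_card_nsmul _ _ _ <| forall_mem_image.2 fun A hA ↦
        hx.measureReal_link_le hH hd hk (hclose A hA)
    _ ≤ Real.exp (40 * (4 ^ k * d)) * (2 * Real.exp (2 * d - 50 * (4 ^ k * d))) := by
      rw [nsmul_eq_mul]
      gcongr
    _ ≤ Real.exp (-(5 * d)) * (1 / 2) ^ (k + 1) := exp_mul_two_mul_exp_le k hd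

theorem GramBound.norm_signedSum_le_of_links (hx : GramBound H x) {ε : ι → Bool} {A : Finset ι}
    {S : ℕ → Finset ι} {K : ℕ} (hS0 : S 0 = ∅)
    (hlinks : ∀ k < K, ‖signedSum x ε (S (k + 1)) - signedSum x ε (S k)‖
      ≤ 36 * √(H * Fintype.card ι * finrank ℝ E) / 2 ^ k)
    (hSK : (#(A ∆ S K) : ℝ) ≤ finrank ℝ E) :
    ‖signedSum x ε A‖ ≤ 74 * √(H * Fintype.card ι * finrank ℝ E) := by
  have hempty : signedSum x ε (S 0) = 0 := by rw [hS0, signedSum, sum_empty]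
  have hchain := norm_sub_le_two_mul_of_forall_norm_sub_le (S := fun k ↦ signedSum x ε (S k))
    (by positivity) hlinks
  rw [hempty, sub_zero] at hchain
  linarith [norm_le_norm_add_norm_sub' (signedSum x ε A) (signedSum x ε (S K)),
    hx.norm_signedSum_sub_le ε hSK]

/- Chaining: `A` is decomposed along its successive approximations. Level `k` has `exp (O(4ᵏ d))`
links, and the Gram bound makes each of them a Rademacher sum of variance proxy `O(H n / 16ᵏ)`, so
that the links contribute a geometric series. -/
theorem GramBound.measureReal_exists_lt_norm_signedSum_le [FiniteDimensional ℝ E]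
    [Nontrivial E] (hx : GramBound H x) (hH : 0 < H) (h𝒜 : 𝒜.vcDim ≤ finrank ℝ E) :
    (rademacher ι).real {ε | ∃ A ∈ 𝒜,
        74 * √(H * Fintype.card ι * finrank ℝ E) < ‖signedSum x ε A‖}
      ≤ Real.exp (-(5 * finrank ℝ E)) := by
  obtain ⟨π, hπ0, hcard, hclose⟩ := exists_successive_approximations finrank_pos h𝒜
  obtain ⟨K, hlevels, hK⟩ :=
    exists_forall_lt_pow_mul_le (b := 256) (by norm_num) (finrank_pos (R := ℝ) (M := E))
      (Fintype.card ι)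
  set R := √(H * Fintype.card ι * finrank ℝ E)
  set link : ℕ → Set (ι → Bool) := fun k ↦ {ε | ∃ A ∈ 𝒜, 36 * R / 2 ^ k
    < ‖signedSum x ε (π (k + 1) A) - signedSum x ε (π k A)‖}
  have hlink : ∀ k ∈ range K, (rademacher ι).real (link k)
      ≤ Real.exp (-(5 * finrank ℝ E)) * (1 / 2) ^ (k + 1) := fun k hk ↦ by
    refine hx.measureReal_exists_link_le hH finrank_pos (hlevels k (mem_range.1 hk)) ?_
      fun A hA ↦ ?_
    · refine (mul_le_mul (hcard _) (hcard _) (by positivity) (by positivity)).trans_eq ?_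
      rw [← Real.exp_add]
      ring_nf
    · have htriangle : (#(π (k + 1) A ∆ π k A) : ℝ) ≤ #(A ∆ π (k + 1) A) + #(A ∆ π k A) := by
        rw [symmDiff_comm A]
        exact_mod_cast (card_le_card (symmDiff_triangle _ A _)).trans (card_union_le _ _)
      have hmono : (Fintype.card ι : ℝ) / 256 ^ (k + 1) ≤ Fintype.card ι / 256 ^ k := by
        gcongr <;> norm_num
      linarith [hclose k A hA, hclose (k + 1) A hA]
  have hsubset : {ε | ∃ A ∈ 𝒜, 74 * R < ‖signedSum x ε A‖} ⊆ ⋃ k ∈ range K, link k := by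
    rintro ε ⟨A, hA, hε⟩
    by_contra hcon
    simp only [Set.mem_iUnion₂, link, Set.mem_ofPred_eq, mem_range, not_exists, not_and,
      not_lt] at hcon
    refine hε.not_ge (hx.norm_signedSum_le_of_links (S := fun k ↦ π k A) (hπ0 A)
      (fun k hk ↦ hcon k hk A hA) ?_)
    exact (hclose K A hA).trans ((div_le_iff₀' (by positivity)).2 (by exact_mod_cast hK.le))
  calc _ ≤ ∑ k ∈ range K, (rademacher ι).real (link k) :=
      (measureReal_mono hsubset (measure_ne_top _ _)).trans (measureReal_biUnion_finset_le _ _)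
    _ ≤ ∑ k ∈ range K, Real.exp (-(5 * finrank ℝ E)) * (1 / 2) ^ (k + 1) := sum_le_sum hlink
    _ ≤ Real.exp (-(5 * finrank ℝ E)) := by
      rw [← mul_sum]
      exact mul_le_of_le_one_right (Real.exp_nonneg _) (sum_one_half_pow_succ_le_one K)

end Chaining

section QuantileLoss

theorem intervalIntegrable_ite_pos (u c : ℝ) :
    IntervalIntegrable (fun s ↦ if 0 < u + s * c then c else 0) volume 0 1 := by
  have hmeas : Measurable fun s : ℝ ↦ if 0 < u + s * c then c else 0 :=
    Measurable.ite (measurableSet_lt measurable_const (by fun_prop)) measurable_const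
      measurable_const
  refine intervalIntegrable_iff.2 <| Measure.integrableOn_of_bounded (M := |c|) (by simp)
    hmeas.aestronglyMeasurable <| .of_forall fun s ↦ ?_
  split_ifs <;> simp

theorem integral_ite_pos (u c : ℝ) :
    ∫ s in (0 : ℝ)..1, (if 0 < u + s * c then c else 0) = max (u + c) 0 - max u 0 := by
  rcases eq_or_ne c 0 with rfl | hc
  · simp
  have hderiv (s : ℝ) (hs : u + s * c ≠ 0) :
      HasDerivAt (fun s ↦ max (u + s * c) 0) (if 0 < u + s * c then c else 0) s := by
    have haffine : HasDerivAt (fun s ↦ u + s * c) c s := by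
      simpa using ((hasDerivAt_id s).mul_const c).const_add u
    rcases lt_or_gt_of_ne hs with hneg | hpos
    · rw [if_neg hneg.not_gt]
      refine (hasDerivAt_const s (0 : ℝ)).congr_of_eventuallyEq ?_
      filter_upwards [haffine.continuousAt.eventually_lt_const hneg] with r hr
      exact max_eq_right hr.le
    · rw [if_pos hpos]
      refine haffine.congr_of_eventuallyEq ?_
      filter_upwards [haffine.continuousAt.eventually_const_lt hpos] with r hr
      exact max_eq_left hr.le
  have hftc := integral_eq_of_hasDerivAt_off_countable_of_le (fun s ↦ max (u + s * c) 0) _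
    zero_le_one (Set.countable_singleton (-u / c)) (by fun_prop)
    (fun s hs ↦ hderiv s fun h ↦ hs.2 ((eq_div_iff hc).2 (eq_neg_of_add_eq_zero_right h)))
    (intervalIntegrable_ite_pos u c)
  simpa using hftc

theorem abs_le_max_one_sub (τ : ℝ) : |τ| ≤ max τ (1 - τ) :=
  abs_le'.2 ⟨le_max_left _ _, le_max_of_le_right (by linarith)⟩

theorem qloss_eq_mul_add_max (τ u : ℝ) : qloss τ u = τ * u + max (-u) 0 := by
  unfold qloss
  split_ifs with hu
  · rw [max_eq_right (by linarith), add_zero]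
  · rw [max_eq_left (by linarith)]
    ring

theorem continuous_qloss (τ : ℝ) : Continuous (qloss τ) := by
  simp_rw [funext (qloss_eq_mul_add_max τ)]
  fun_prop

theorem abs_qloss_sub_qloss_le (τ u v : ℝ) :
    |qloss τ u - qloss τ v| ≤ max τ (1 - τ) * |u - v| := by
  have hqloss (u : ℝ) : qloss τ u = max (τ * u) ((τ - 1) * u) := by
    rw [qloss_eq_mul_add_max, max_comm, ← max_add_add_left]
    ring_nf
  have hone_sub : |τ - 1| ≤ max τ (1 - τ) := by
    simpa [abs_sub_comm, max_comm] using abs_le_max_one_sub (1 - τ)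
  rw [hqloss, hqloss]
  refine (abs_max_sub_max_le_max _ _ _ _).trans (max_le ?_ ?_) <;>
    rw [← mul_sub, abs_mul] <;> gcongr
  exact abs_le_max_one_sub τ

variable {E : Type*} [NormedAddCommGroup E] [InnerProductSpace ℝ E]

/-- The difference of the quantile losses at the observation `z`, a pair of a covariate and a
response, of the linear predictors `β.1` and `β.2`. -/
def qlossDiff (τ : ℝ) (β : E × E) (z : E × ℝ) : ℝ :=
  qloss τ (z.2 - ⟪z.1, β.1⟫) - qloss τ (z.2 - ⟪z.1, β.2⟫)

theorem continuous_qlossDiff (τ : ℝ) (β : E × E) : Continuous (qlossDiff τ β) := by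
  have := continuous_qloss τ
  unfold qlossDiff
  fun_prop

theorem abs_qlossDiff_le (τ : ℝ) (β : E × E) (z : E × ℝ) :
    |qlossDiff τ β z| ≤ max τ (1 - τ) * |⟪z.1, β.1 - β.2⟫| := by
  refine (abs_qloss_sub_qloss_le τ _ _).trans_eq ?_
  rw [sub_sub_sub_cancel_left, ← inner_sub_right, ← abs_neg, ← inner_neg_right, neg_sub]

variable {ι : Type*} {x : ι → E} {y : ι → ℝ} {ε : ι → Bool} {R : ℝ}

theorem inner_signedSum (A : Finset ι) (v : E) :
    ⟪signedSum x ε A, v⟫ = ∑ i ∈ A, boolSign (ε i) * ⟪x i, v⟫ := by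
  simp_rw [signedSum, sum_inner, real_inner_smul_left]

theorem abs_inner_signedSum_le {A : Finset ι} (hA : ‖signedSum x ε A‖ ≤ R) (v : E) :
    |⟪signedSum x ε A, v⟫| ≤ R * ‖v‖ :=
  (abs_real_inner_le_norm _ _).trans (by gcongr)

variable [Fintype ι]

/- The gradient of the left side in `β₁` is the signed sum over `belowHyperplane x y β₁`, so the
difference is an integral of such signed sums along the segment from `β₂` to `β₁`. -/
theorem abs_sum_boolSign_mul_max_sub_max_le
    (hbelow : ∀ b, ‖signedSum x ε (belowHyperplane x y b)‖ ≤ R) (β₁ β₂ : E) :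
    |∑ i, boolSign (ε i) * (max (⟪x i, β₁⟫ - y i) 0 - max (⟪x i, β₂⟫ - y i) 0)|
      ≤ R * ‖β₁ - β₂‖ := by
  set v := β₁ - β₂
  have hintegral (i : ι) : max (⟪x i, β₁⟫ - y i) 0 - max (⟪x i, β₂⟫ - y i) 0
      = ∫ s in (0 : ℝ)..1, if 0 < ⟪x i, β₂⟫ - y i + s * ⟪x i, v⟫ then ⟪x i, v⟫ else 0 := by
    rw [integral_ite_pos, inner_sub_right]
    ring_nf
  have hgradient (s : ℝ) : ∑ i, boolSign (ε i) *
      (if 0 < ⟪x i, β₂⟫ - y i + s * ⟪x i, v⟫ then ⟪x i, v⟫ else 0)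
      = ⟪signedSum x ε (belowHyperplane x y (β₂ + s • v)), v⟫ := by
    rw [inner_signedSum, belowHyperplane, sum_filter]
    refine sum_congr rfl fun i _ ↦ ?_
    have hiff : 0 < ⟪x i, β₂⟫ - y i + s * ⟪x i, v⟫ ↔ y i < ⟪x i, β₂ + s • v⟫ := by
      rw [inner_add_right, real_inner_smul_right, sub_add_eq_add_sub, sub_pos]
    simp_rw [hiff, mul_ite, mul_zero]
  simp_rw [hintegral, ← intervalIntegral.integral_const_mul]
  rw [← intervalIntegral.integral_finsetSum fun i _ ↦
    (intervalIntegrable_ite_pos _ _).const_mul _]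
  simp_rw [hgradient]
  simpa using intervalIntegral.norm_integral_le_of_norm_le_const (a := 0) (b := 1)
    (f := fun s ↦ ⟪signedSum x ε (belowHyperplane x y (β₂ + s • v)), v⟫)
    fun s _ ↦ abs_inner_signedSum_le (hbelow _) v

theorem abs_sum_boolSign_mul_qlossDiff_le (τ : ℝ)
    (hbelow : ∀ b, ‖signedSum x ε (belowHyperplane x y b)‖ ≤ R)
    (huniv : ‖signedSum x ε univ‖ ≤ R) (β : E × E) :
    |∑ i, boolSign (ε i) * qlossDiff τ β (x i, y i)|
      ≤ 3 * max τ (1 - τ) * R * ‖β.1 - β.2‖ := by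
  set v := β.1 - β.2
  have hone : 1 ≤ 2 * max τ (1 - τ) := by linarith [le_max_left τ (1 - τ), le_max_right τ (1 - τ)]
  have hR : 0 ≤ R * ‖v‖ := mul_nonneg ((norm_nonneg _).trans huniv) (norm_nonneg _)
  have hdecomp : ∑ i, boolSign (ε i) * qlossDiff τ β (x i, y i) = -τ * ⟪signedSum x ε univ, v⟫
      + ∑ i, boolSign (ε i) * (max (⟪x i, β.1⟫ - y i) 0 - max (⟪x i, β.2⟫ - y i) 0) := by
    rw [inner_signedSum, mul_sum, ← sum_add_distrib]
    refine sum_congr rfl fun i _ ↦ ?_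
    simp only [qlossDiff, qloss_eq_mul_add_max, neg_sub, v, inner_sub_right]
    ring
  calc _ ≤ |τ| * |⟪signedSum x ε univ, v⟫| + R * ‖v‖ := by
        rw [hdecomp, ← abs_neg τ, ← abs_mul]
        exact (abs_add_le _ _).trans
          (by gcongr; exact abs_sum_boolSign_mul_max_sub_max_le hbelow _ _)
    _ ≤ max τ (1 - τ) * (R * ‖v‖) + (2 * max τ (1 - τ)) * (R * ‖v‖) := by
        refine add_le_add (mul_le_mul (abs_le_max_one_sub τ) (abs_inner_signedSum_le huniv v)
          (abs_nonneg _) (by linarith)) (le_mul_of_one_le_left hR hone)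
    _ = 3 * max τ (1 - τ) * R * ‖v‖ := by ring

theorem GramBound.measureReal_exists_lt_abs_sum_boolSign_mul_qlossDiff_le
    [FiniteDimensional ℝ E] [Nontrivial E] {H : ℝ≥0} (hx : GramBound H x) (hH : 0 < H)
    (y : ι → ℝ) (τ : ℝ) :
    (rademacher ι).real {ε | ∃ β : E × E,
        3 * max τ (1 - τ) * (74 * √(H * Fintype.card ι * finrank ℝ E)) * ‖β.1 - β.2‖
          < |∑ i, boolSign (ε i) * qlossDiff τ β (x i, y i)|}
      ≤ 2 * Real.exp (-(5 * finrank ℝ E)) := by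
  classical
  set R := 74 * √(H * Fintype.card ι * finrank ℝ E)
  set bad : Finset (Finset ι) → Set (ι → Bool) := fun 𝒜 ↦ {ε | ∃ A ∈ 𝒜, R < ‖signedSum x ε A‖}
  have hsubset : {ε | ∃ β : E × E, 3 * max τ (1 - τ) * R * ‖β.1 - β.2‖
      < |∑ i, boolSign (ε i) * qlossDiff τ β (x i, y i)|}
      ⊆ bad (halfspaceTraces x y) ∪ bad {univ} := by
    rintro ε ⟨β, hβ⟩
    contrapose! hβ
    simp only [bad, Set.mem_union, Set.mem_ofPred_eq, not_or, not_exists, not_and, not_lt] at hβ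
    exact abs_sum_boolSign_mul_qlossDiff_le τ
      (fun b ↦ hβ.1 _ (belowHyperplane_mem_halfspaceTraces b)) (hβ.2 _ (mem_singleton_self _)) β
  calc _ ≤ (rademacher ι).real (bad (halfspaceTraces x y)) + (rademacher ι).real (bad {univ}) :=
      (measureReal_mono hsubset (measure_ne_top _ _)).trans (measureReal_union_le _ _)
    _ ≤ Real.exp (-(5 * finrank ℝ E)) + Real.exp (-(5 * finrank ℝ E)) :=
      add_le_add (hx.measureReal_exists_lt_norm_signedSum_le hH vcDim_halfspaceTraces_le)
        (hx.measureReal_exists_lt_norm_signedSum_le hH (by simp [vcDim_singleton]))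
    _ = 2 * Real.exp (-(5 * finrank ℝ E)) := (two_mul _).symm

theorem GramBound.measure_exists_lt_abs_sum_boolSign_mul_qlossDiff_le [FiniteDimensional ℝ E]
    [Nontrivial E] {c : ℝ≥0} (hx : GramBound (144 * c) x) (hc : 0 < c) (y : ι → ℝ) (τ : ℝ) :
    rademacher ι {ε | ∃ β : E × E,
        2664 * max τ (1 - τ) * √(c * Fintype.card ι * finrank ℝ E) * ‖β.1 - β.2‖
          < |∑ i, boolSign (ε i) * qlossDiff τ β (x i, y i)|}
      ≤ ENNReal.ofReal (2 * Real.exp (-(5 * finrank ℝ E))) := by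
  have hsqrt : √((144 * c : ℝ≥0) * Fintype.card ι * finrank ℝ E)
      = 12 * √(c * Fintype.card ι * finrank ℝ E) := by
    rw [← Real.sqrt_sq (show (0 : ℝ) ≤ 12 by norm_num), ← Real.sqrt_mul (by positivity)]
    push_cast
    ring_nf
  have hradius (β : E × E) :
      2664 * max τ (1 - τ) * √(c * Fintype.card ι * finrank ℝ E) * ‖β.1 - β.2‖
      = 3 * max τ (1 - τ) * (74 * √((144 * c : ℝ≥0) * Fintype.card ι * finrank ℝ E))
        * ‖β.1 - β.2‖ := by
    rw [hsqrt]
    ring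
  simp_rw [hradius]
  rw [← ofReal_measureReal]
  exact ENNReal.ofReal_le_ofReal
    (hx.measureReal_exists_lt_abs_sum_boolSign_mul_qlossDiff_le (by positivity) y τ)

end QuantileLoss

section Symmetrization

theorem one_half_le_measure_abs_sub_integral_le {Ω : Type*} {_ : MeasurableSpace Ω}
    {μ : Measure Ω} [IsProbabilityMeasure μ] {X : Ω → ℝ} {c : ℝ} (hX : MemLp X 2 μ) (hc : 0 ≤ c)
    (hvar : 2 * Var[X; μ] ≤ c ^ 2) : 2⁻¹ ≤ μ {ω | |X ω - ∫ ω', X ω' ∂μ| ≤ c} := by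
  have hdeviation : μ {ω | |X ω - ∫ ω', X ω' ∂μ| ≤ c}ᶜ ≤ 2⁻¹ := by
    rcases hc.eq_or_lt with rfl | hc
    · have hconst := ae_eq_integral_of_variance_eq_zero hX
        (le_antisymm (by linarith) (variance_nonneg X μ))
      refine (measure_mono_null ?_ (ae_iff.1 hconst)).trans_le zero_le
      exact fun ω hω hX ↦ hω (by simp [hX])
    · calc μ {ω | |X ω - ∫ ω', X ω' ∂μ| ≤ c}ᶜ ≤ μ {ω | c ≤ |X ω - ∫ ω', X ω' ∂μ|} :=
          measure_mono fun ω (hω : ¬ |X ω - ∫ ω', X ω' ∂μ| ≤ c) ↦ (lt_of_not_ge hω).le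
        _ ≤ ENNReal.ofReal (Var[X; μ] / c ^ 2) := meas_ge_le_variance_div_sq hX hc
        _ ≤ ENNReal.ofReal 2⁻¹ := by
          gcongr
          rw [div_le_iff₀ (by positivity)]
          linarith
        _ = 2⁻¹ := by rw [ENNReal.ofReal_inv_of_pos two_pos, ENNReal.ofReal_ofNat]
  have htotal := (measure_univ_le_add_compl {ω | |X ω - ∫ ω', X ω' ∂μ| ≤ c}).trans
    (add_le_add_right hdeviation _)
  rw [measure_univ, ← ENNReal.inv_two_add_inv_two] at htotal
  exact (ENNReal.add_le_add_iff_right (by simp)).1 htotal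

theorem measure_prod_le_measure_lt_add {α β : Type*} [MeasurableSpace α] [MeasurableSpace β]
    {μ : Measure α} [IsProbabilityMeasure μ] {ν : Measure β} [IsProbabilityMeasure ν]
    {T : Set (α × β)} (hT : MeasurableSet T) (κ : ℝ≥0∞) :
    (μ.prod ν) T ≤ μ {a | κ < ν (Prod.mk a ⁻¹' T)} + κ := by
  have hmeas : MeasurableSet {a | κ < ν (Prod.mk a ⁻¹' T)} :=
    measurableSet_lt measurable_const (measurable_measure_prodMk_left hT)
  calc (μ.prod ν) T = ∫⁻ a, ν (Prod.mk a ⁻¹' T) ∂μ := Measure.prod_apply hT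
    _ ≤ ∫⁻ a, {a | κ < ν (Prod.mk a ⁻¹' T)}.indicator 1 a + κ ∂μ := by
      refine lintegral_mono fun a ↦ ?_
      by_cases ha : κ < ν (Prod.mk a ⁻¹' T)
      · simpa [ha] using prob_le_one.trans le_self_add
      · simpa only [Set.indicator_of_notMem (s := {a | κ < ν (Prod.mk a ⁻¹' T)}) ha, zero_add]
        using not_lt.1 ha
    _ = μ {a | κ < ν (Prod.mk a ⁻¹' T)} + κ := by
      rw [lintegral_add_right _ measurable_const, lintegral_indicator_one hmeas, lintegral_const,
        measure_univ, mul_one]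

theorem half_measure_exists_lt_abs_sub_le {α Θ : Type*} [MeasurableSpace α] {ν : Measure α}
    [SFinite ν] {F : Θ → α → ℝ} {I r s : Θ → ℝ} (hr : ∀ θ, 2⁻¹ ≤ ν {a | |F θ a - I θ| ≤ r θ}) :
    2⁻¹ * ν {a | ∃ θ, r θ + s θ < |F θ a - I θ|}
      ≤ (ν.prod ν) {p | ∃ θ, s θ < |F θ p.1 - F θ p.2|} := by
  set B := toMeasurable (ν.prod ν) {p | ∃ θ, s θ < |F θ p.1 - F θ p.2|}
  have hB : MeasurableSet B := measurableSet_toMeasurable _ _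
  have hsection : {a | ∃ θ, r θ + s θ < |F θ a - I θ|} ⊆ {a | 2⁻¹ ≤ ν (Prod.mk a ⁻¹' B)} := by
    rintro a ⟨θ, hθ⟩
    refine (hr θ).trans (measure_mono fun a' ha' ↦ subset_toMeasurable _ _ ⟨θ, ?_⟩)
    have ha'' : |F θ a' - I θ| ≤ r θ := ha'
    linarith [abs_sub_le (F θ a) (F θ a') (I θ)]
  calc _ ≤ 2⁻¹ * ν {a | 2⁻¹ ≤ ν (Prod.mk a ⁻¹' B)} := by gcongr
    _ ≤ ∫⁻ a, ν (Prod.mk a ⁻¹' B) ∂ν :=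
      mul_meas_ge_le_lintegral (measurable_measure_prodMk_left hB) _
    _ = (ν.prod ν) {p | ∃ θ, s θ < |F θ p.1 - F θ p.2|} := by
      rw [← Measure.prod_apply hB, measure_toMeasurable]

variable {ι Z Θ : Type*}

/-- The sample choosing from the `i`-th pair its first element if `ε i` is true and its second one
otherwise. -/
def selectFrom (ε : ι → Bool) (p : ι → Z × Z) (i : ι) : Z := if ε i then (p i).1 else (p i).2

variable [Fintype ι]

theorem sum_fst_sub_sum_snd (f : Z → ℝ) (ε : ι → Bool) (p : ι → Z × Z) :
    ∑ i, f (p i).1 - ∑ i, f (p i).2 = ∑ i, boolSign (ε i) * f (selectFrom ε p i)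
      - ∑ i, boolSign (ε i) * f (selectFrom (fun j ↦ !ε j) p i) := by
  rw [← sum_sub_distrib, ← sum_sub_distrib]
  refine sum_congr rfl fun i _ ↦ ?_
  cases h : ε i <;> simp [selectFrom, boolSign, h]
  ring

variable [MeasurableSpace Z]

theorem measurePreserving_selectFrom (P : ι → Measure Z) [∀ i, IsProbabilityMeasure (P i)]
    (ε : ι → Bool) :
    MeasurePreserving (selectFrom ε) (.pi fun i ↦ (P i).prod (P i)) (.pi P) := by
  refine measurePreserving_pi (f := fun i (q : Z × Z) ↦ if ε i then q.1 else q.2) _ _ fun i ↦ ?_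
  cases ε i
  · exact measurePreserving_snd
  · exact measurePreserving_fst

variable {f : Θ → Z → ℝ} {r : Θ → ℝ}

theorem measurableSet_exists_lt_abs_sum_boolSign_mul
    (hmeas : ∀ ε : ι → Bool,
      MeasurableSet {w : ι → Z | ∃ θ, r θ < |∑ i, boolSign (ε i) * f θ (w i)|}) :
    MeasurableSet {q : (ι → Z) × (ι → Bool) |
      ∃ θ, r θ < |∑ i, boolSign (q.2 i) * f θ (q.1 i)|} := by
  have hslices : {q : (ι → Z) × (ι → Bool) | ∃ θ, r θ < |∑ i, boolSign (q.2 i) * f θ (q.1 i)|}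
      = ⋃ ε, {w | ∃ θ, r θ < |∑ i, boolSign (ε i) * f θ (w i)|} ×ˢ {ε} := by
    ext q
    simp
  rw [hslices]
  exact .iUnion fun ε ↦ (hmeas ε).prod (measurableSet_singleton ε)

variable {P : ι → Measure Z} [∀ i, IsProbabilityMeasure (P i)]

theorem prod_pi_measure_exists_lt_abs_sum_sub_sum_le (ε : ι → Bool) :
    ((Measure.pi P).prod (.pi P)) {p | ∃ θ, 2 * r θ < |∑ i, f θ (p.1 i) - ∑ i, f θ (p.2 i)|}
      ≤ 2 * Measure.pi P {w | ∃ θ, r θ < |∑ i, boolSign (ε i) * f θ (w i)|} := by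
  set B := {w : ι → Z | ∃ θ, r θ < |∑ i, boolSign (ε i) * f θ (w i)|}
  have hselect (ε' : ι → Bool) :
      (Measure.pi fun i ↦ (P i).prod (P i)) (selectFrom ε' ⁻¹' B) ≤ Measure.pi P B :=
    (measurePreserving_selectFrom P ε').measure_preimage_le B
  rw [← (measurePreserving_arrowProdEquivProdArrow Z Z ι P P).measure_preimage_equiv]
  calc _ ≤ (Measure.pi fun i ↦ (P i).prod (P i))
        (selectFrom ε ⁻¹' B ∪ selectFrom (fun i ↦ !ε i) ⁻¹' B) := by
        refine measure_mono ?_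
        rintro p ⟨θ, hθ : 2 * r θ < |∑ i, f θ (p i).1 - ∑ i, f θ (p i).2|⟩
        rw [sum_fst_sub_sum_snd (f θ) ε] at hθ
        by_contra hp
        simp only [B, Set.mem_union, Set.mem_preimage, Set.mem_ofPred_eq, not_or, not_exists,
          not_lt] at hp
        linarith [hp.1 θ, hp.2 θ, abs_sub (∑ i, boolSign (ε i) * f θ (selectFrom ε p i))
          (∑ i, boolSign (ε i) * f θ (selectFrom (fun i ↦ !ε i) p i))]
    _ ≤ 2 * Measure.pi P B := by
      rw [two_mul]
      exact (measure_union_le _ _).trans (add_le_add (hselect _) (hselect _))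

theorem prod_pi_measure_exists_lt_abs_sum_sub_sum_le_rademacher
    (hmeas : ∀ ε : ι → Bool,
      MeasurableSet {w : ι → Z | ∃ θ, r θ < |∑ i, boolSign (ε i) * f θ (w i)|})
    (κ : ℝ≥0∞) :
    ((Measure.pi P).prod (.pi P)) {p | ∃ θ, 2 * r θ < |∑ i, f θ (p.1 i) - ∑ i, f θ (p.2 i)|}
      ≤ 2 * (Measure.pi P
        {w | κ < rademacher ι {ε | ∃ θ, r θ < |∑ i, boolSign (ε i) * f θ (w i)|}} + κ) := by
  set T : Set ((ι → Z) × (ι → Bool)) := {q | ∃ θ, r θ < |∑ i, boolSign (q.2 i) * f θ (q.1 i)|}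
  have hT : MeasurableSet T := measurableSet_exists_lt_abs_sum_boolSign_mul hmeas
  calc _ = ∫⁻ _, ((Measure.pi P).prod (.pi P))
        {p | ∃ θ, 2 * r θ < |∑ i, f θ (p.1 i) - ∑ i, f θ (p.2 i)|} ∂rademacher ι := by
        rw [lintegral_const, measure_univ, mul_one]
    _ ≤ ∫⁻ ε, 2 * Measure.pi P ((·, ε) ⁻¹' T) ∂rademacher ι :=
      lintegral_mono fun ε ↦ prod_pi_measure_exists_lt_abs_sum_sub_sum_le ε
    _ = 2 * ((Measure.pi P).prod (rademacher ι)) T := by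
      rw [lintegral_const_mul _ (measurable_measure_prodMk_right hT), Measure.prod_apply_symm hT]
    _ ≤ _ := by
      gcongr
      exact measure_prod_le_measure_lt_add hT κ

theorem measure_exists_lt_abs_sum_sub_le_of_iIndepFun {Ω : Type*} {_ : MeasurableSpace Ω}
    {μ : Measure Ω} [IsProbabilityMeasure μ] {W : ι → Ω → Z} (hW : ∀ i, Measurable (W i))
    (hindep : iIndepFun W μ)
    (hmeas : ∀ ε : ι → Bool,
      MeasurableSet {w : ι → Z | ∃ θ, r θ < |∑ i, boolSign (ε i) * f θ (w i)|})
    {I : Θ → ℝ} (hr : ∀ θ, 2⁻¹ ≤ μ {ω | |∑ i, f θ (W i ω) - I θ| ≤ 2 * r θ}) (κ : ℝ≥0∞) :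
    μ {ω | ∃ θ, 4 * r θ < |∑ i, f θ (W i ω) - I θ|} ≤ 4 * (μ
      {ω | κ < rademacher ι {ε | ∃ θ, r θ < |∑ i, boolSign (ε i) * f θ (W i ω)|}} + κ) := by
  have hprob (i : ι) : IsProbabilityMeasure (μ.map (W i)) :=
    Measure.isProbabilityMeasure_map (hW i).aemeasurable
  have hlaw : MeasurePreserving (fun ω i ↦ W i ω) μ (.pi fun i ↦ μ.map (W i)) :=
    ⟨measurable_pi_lambda _ hW,
      (iIndepFun_iff_map_fun_eq_pi_map fun i ↦ (hW i).aemeasurable).1 hindep⟩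
  have hghost := half_measure_exists_lt_abs_sub_le (ν := .pi fun i ↦ μ.map (W i))
    (F := fun θ w ↦ ∑ i, f θ (w i)) (s := fun θ ↦ 2 * r θ)
    fun θ ↦ (hr θ).trans (hlaw.measure_preimage_le _)
  have hsign := prod_pi_measure_exists_lt_abs_sum_sub_sum_le_rademacher
    (P := fun i ↦ μ.map (W i)) hmeas κ
  set ν := Measure.pi fun i ↦ μ.map (W i)
  set p : (ι → Z) → ℝ≥0∞ :=
    fun w ↦ rademacher ι {ε | ∃ θ, r θ < |∑ i, boolSign (ε i) * f θ (w i)|}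
  have hp : MeasurableSet {w | κ < p w} := measurableSet_lt measurable_const
    (measurable_measure_prodMk_left (measurableSet_exists_lt_abs_sum_boolSign_mul hmeas))
  have hfour (θ : Θ) : 2 * r θ + 2 * r θ = 4 * r θ := by ring
  simp_rw [hfour] at hghost
  calc _ ≤ ν {w | ∃ θ, 4 * r θ < |∑ i, f θ (w i) - I θ|} := hlaw.measure_preimage_le _
    _ ≤ 2 * (2 * (ν {w | κ < p w} + κ)) := by
      rw [← ENNReal.inv_mul_le_iff two_ne_zero ENNReal.ofNat_ne_top]
      exact hghost.trans hsign
    _ = 4 * (ν {w | κ < p w} + κ) := by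
      rw [← mul_assoc]
      norm_num
    _ = _ := by rw [← hlaw.measure_preimage hp.nullMeasurableSet]; rfl

end Symmetrization

section Concentration

variable {Ω : Type*} {_ : MeasurableSpace Ω} {μ : Measure Ω}

theorem variance_sum_le_card_mul {ι : Type*} [Fintype ι] {Z : ι → Ω → ℝ} {V : ℝ}
    (hZ : ∀ i, MemLp (Z i) 2 μ) (hindep : iIndepFun Z μ) (hV : ∀ i, ∫ ω, Z i ω ^ 2 ∂μ ≤ V) :
    Var[fun ω ↦ ∑ i, Z i ω; μ] ≤ Fintype.card ι * V := by
  have := hindep.isProbabilityMeasure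
  calc Var[fun ω ↦ ∑ i, Z i ω; μ] = ∑ i, Var[Z i; μ] := by
        rw [← IndepFun.variance_sum (fun i _ ↦ hZ i) fun i _ j _ hij ↦ hindep.indepFun hij]
        congr 1
        ext ω
        simp
    _ ≤ ∑ _i : ι, V := sum_le_sum fun i _ ↦ (variance_le_expectation_sq (hZ i).1).trans (hV i)
    _ = Fintype.card ι * V := by simp

theorem ofReal_one_sub_le_measure_of_measure_compl_le [IsProbabilityMeasure μ] {s : Set Ω}
    {p : ℝ} (hp : 0 ≤ p) (hs : μ sᶜ ≤ ENNReal.ofReal p) : ENNReal.ofReal (1 - p) ≤ μ s := by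
  rw [ENNReal.ofReal_sub _ hp, ENNReal.ofReal_one, tsub_le_iff_right, ← measure_univ (μ := μ)]
  exact (measure_univ_le_add_compl s).trans (by gcongr)

variable {E : Type*} [NormedAddCommGroup E] [InnerProductSpace ℝ E]

/-- The empirical quantile risk `(1 / n) ∑ i, ρ_{Q,τ}(y i - ⟪x i, β⟫)` of the linear predictor
`β` on a sample of size `n`. -/
def empRisk {ι : Type*} [Fintype ι] (τ : ℝ) (x : ι → E) (y : ι → ℝ) (β : E) : ℝ :=
  (Fintype.card ι : ℝ)⁻¹ * ∑ i, qloss τ (y i - ⟪x i, β⟫)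

theorem empRisk_sub_empRisk {ι : Type*} [Fintype ι] (τ : ℝ) (x : ι → E) (y : ι → ℝ) (β₁ β₂ : E) :
    empRisk τ x y β₁ - empRisk τ x y β₂
      = (Fintype.card ι : ℝ)⁻¹ * ∑ i, qlossDiff τ (β₁, β₂) (x i, y i) := by
  simp_rw [empRisk, qlossDiff, ← mul_sub, ← sum_sub_distrib]

variable {c : ℝ≥0}

section SingleObservation

variable {X : Ω → E} {Y : Ω → ℝ}

theorem integral_inner_sq_le [IsProbabilityMeasure μ]
    (hX : ∀ v, HasSubgaussianMGF (fun ω ↦ ⟪X ω, v⟫) (c * ‖v‖₊ ^ 2) μ) (hc : 0 < c) (v : E) :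
    ∫ ω, ⟪X ω, v⟫ ^ 2 ∂μ ≤ 4 * (c * ‖v‖ ^ 2) := by
  rcases eq_or_ne v 0 with rfl | hv
  · simp
  · simpa using integral_sq_le_four_mul (hX v) (by have := nnnorm_pos.2 hv; positivity)

variable [MeasurableSpace E] [BorelSpace E] [FiniteDimensional ℝ E]

theorem measurable_qlossDiff (τ : ℝ) (β : E × E) : Measurable (qlossDiff τ β) := by
  have := FiniteDimensional.proper ℝ E
  exact (continuous_qlossDiff τ β).measurable

theorem memLp_two_qlossDiff (hXm : Measurable X) (hYm : Measurable Y)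
    (hX : ∀ v, HasSubgaussianMGF (fun ω ↦ ⟪X ω, v⟫) (c * ‖v‖₊ ^ 2) μ) (τ : ℝ) (β : E × E) :
    MemLp (fun ω ↦ qlossDiff τ β (X ω, Y ω)) 2 μ :=
  ((hX (β.1 - β.2)).memLp 2).of_le_mul
    ((measurable_qlossDiff τ β).comp (hXm.prodMk hYm)).aestronglyMeasurable
    (.of_forall fun _ ↦ abs_qlossDiff_le τ β _)

theorem integral_qlossDiff_sq_le [IsProbabilityMeasure μ] (hXm : Measurable X)
    (hYm : Measurable Y) (hX : ∀ v, HasSubgaussianMGF (fun ω ↦ ⟪X ω, v⟫) (c * ‖v‖₊ ^ 2) μ)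
    (hc : 0 < c) (τ : ℝ) (β : E × E) :
    ∫ ω, qlossDiff τ β (X ω, Y ω) ^ 2 ∂μ
      ≤ max τ (1 - τ) ^ 2 * (4 * (c * ‖β.1 - β.2‖ ^ 2)) :=
  calc _ ≤ ∫ ω, max τ (1 - τ) ^ 2 * ⟪X ω, β.1 - β.2⟫ ^ 2 ∂μ := by
        refine integral_mono (memLp_two_qlossDiff hXm hYm hX τ β).integrable_sq
          (((hX _).memLp 2).integrable_sq.const_mul _) fun ω ↦ ?_
        have h := pow_le_pow_left₀ (abs_nonneg _) (abs_qlossDiff_le τ β (X ω, Y ω)) 2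
        rwa [mul_pow, sq_abs, sq_abs] at h
    _ ≤ _ := by
        rw [integral_const_mul]
        gcongr
        exact integral_inner_sq_le hX hc _

end SingleObservation

variable {ι : Type*} [Fintype ι] [MeasurableSpace E] [BorelSpace E] [FiniteDimensional ℝ E]

theorem measurableSet_exists_lt_abs_sum_boolSign_mul_qlossDiff (τ : ℝ) (r : E × E → ℝ)
    (ε : ι → Bool) :
    MeasurableSet {w : ι → E × ℝ | ∃ β, r β < |∑ i, boolSign (ε i) * qlossDiff τ β (w i)|} := by
  have := FiniteDimensional.proper ℝ E
  have hopen (β : E × E) :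
      IsOpen {w : ι → E × ℝ | r β < |∑ i, boolSign (ε i) * qlossDiff τ β (w i)|} := by
    have := continuous_qlossDiff τ β
    exact isOpen_lt continuous_const (by fun_prop)
  simpa only [← Set.ofPred_exists] using (isOpen_iUnion hopen).measurableSet

variable {X : ι → Ω → E} {Y : ι → Ω → ℝ}

theorem one_half_le_measure_abs_sum_qlossDiff_sub_integral_le
    (hX : ∀ i, Measurable (X i)) (hY : ∀ i, Measurable (Y i))
    (hindep : iIndepFun (fun i ω ↦ (X i ω, Y i ω)) μ)
    (hsub : ∀ i v, HasSubgaussianMGF (fun ω ↦ ⟪X i ω, v⟫) (c * ‖v‖₊ ^ 2) μ) (hc : 0 < c)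
    (τ : ℝ) (β : E × E) :
    2⁻¹ ≤ μ {ω | |∑ i, qlossDiff τ β (X i ω, Y i ω)
        - ∫ ω', ∑ i, qlossDiff τ β (X i ω', Y i ω') ∂μ|
      ≤ 3 * max τ (1 - τ) * √(c * Fintype.card ι) * ‖β.1 - β.2‖} := by
  have := hindep.isProbabilityMeasure
  have hτ : 0 ≤ max τ (1 - τ) := (abs_nonneg τ).trans (abs_le_max_one_sub τ)
  have hmem (i : ι) := memLp_two_qlossDiff (hX i) (hY i) (hsub i) τ β
  have hvar := variance_sum_le_card_mul hmem
    (hindep.comp (fun _ ↦ qlossDiff τ β) fun _ ↦ measurable_qlossDiff τ β)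
    fun i ↦ integral_qlossDiff_sq_le (hX i) (hY i) (hsub i) hc τ β
  refine one_half_le_measure_abs_sub_integral_le (memLp_finsetSum _ fun i _ ↦ hmem i)
    (by positivity) ?_
  rw [mul_pow, mul_pow, mul_pow, Real.sq_sqrt (by positivity)]
  linarith [show 0 ≤ max τ (1 - τ) ^ 2 * (c * Fintype.card ι) * ‖β.1 - β.2‖ ^ 2 by positivity]

theorem four_mul_three_mul_exp_add_two_mul_exp_le {d : ℕ} (hd : 0 < d) :
    4 * (3 * Real.exp (-(7 * d)) + 2 * Real.exp (-(5 * d))) ≤ Real.exp (-d) := by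
  have hd' : (1 : ℝ) ≤ d := by exact_mod_cast hd
  have h20 : 20 ≤ Real.exp (4 * d) :=
    calc (20 : ℝ) ≤ 2.7 ^ 4 := by norm_num
      _ ≤ Real.exp 1 ^ 4 := by
        gcongr
        linarith [Real.exp_one_gt_d9]
      _ ≤ Real.exp (4 * d) := by
        rw [← Real.exp_nat_mul]
        gcongr
        push_cast
        linarith
  calc _ ≤ 4 * (3 * Real.exp (-(5 * d)) + 2 * Real.exp (-(5 * d))) := by gcongr; norm_num
    _ = 20 * Real.exp (-(5 * d)) := by ring
    _ ≤ Real.exp (4 * d) * Real.exp (-(5 * d)) := by gcongr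
    _ = Real.exp (-d) := by
      rw [← Real.exp_add]
      ring_nf

theorem measure_exists_lt_abs_sum_qlossDiff_sub_integral_le [Nontrivial E]
    (hX : ∀ i, Measurable (X i)) (hY : ∀ i, Measurable (Y i))
    (hindep : iIndepFun (fun i ω ↦ (X i ω, Y i ω)) μ)
    (hsub : ∀ i v, HasSubgaussianMGF (fun ω ↦ ⟪X i ω, v⟫) (c * ‖v‖₊ ^ 2) μ) (hc : 0 < c) (τ : ℝ) :
    μ {ω | ∃ β : E × E,
        4 * (2664 * max τ (1 - τ) * √(c * Fintype.card ι * finrank ℝ E) * ‖β.1 - β.2‖)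
          < |∑ i, qlossDiff τ β (X i ω, Y i ω)
            - ∫ ω', ∑ i, qlossDiff τ β (X i ω', Y i ω') ∂μ|}
      ≤ ENNReal.ofReal (Real.exp (-finrank ℝ E)) := by
  have := hindep.isProbabilityMeasure
  have hτ : 0 ≤ max τ (1 - τ) := (abs_nonneg τ).trans (abs_le_max_one_sub τ)
  have hd : 1 ≤ (finrank ℝ E : ℝ) := by exact_mod_cast finrank_pos
  set r : E × E → ℝ := fun β ↦
    2664 * max τ (1 - τ) * √(c * Fintype.card ι * finrank ℝ E) * ‖β.1 - β.2‖
  set κ := ENNReal.ofReal (2 * Real.exp (-(5 * finrank ℝ E)))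
  have hsqrt : √(c * Fintype.card ι) ≤ √(c * Fintype.card ι * finrank ℝ E) :=
    Real.sqrt_le_sqrt (le_mul_of_one_le_right (by positivity) hd)
  have hradius (β : E × E) :
      3 * max τ (1 - τ) * √(c * Fintype.card ι) * ‖β.1 - β.2‖ ≤ 2 * r β :=
    calc _ ≤ 2 * 2664 * max τ (1 - τ) * √(c * Fintype.card ι * finrank ℝ E) * ‖β.1 - β.2‖ := by
          gcongr
          norm_num
      _ = 2 * r β := by ring
  have hgram : μ {ω | ¬ GramBound (144 * c) fun i ↦ X i ω}
      ≤ ENNReal.ofReal (3 * Real.exp (-(7 * finrank ℝ E))) := by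
    rw [← ofReal_measureReal]
    exact ENNReal.ofReal_le_ofReal (measureReal_not_gramBound_le hX
      (hindep.comp (fun _ ↦ Prod.fst) fun _ ↦ measurable_fst) hsub hc)
  calc μ {ω | ∃ β, 4 * r β < _}
      ≤ 4 * (μ {ω | κ < rademacher ι
          {ε | ∃ β, r β < |∑ i, boolSign (ε i) * qlossDiff τ β (X i ω, Y i ω)|}} + κ) :=
        measure_exists_lt_abs_sum_sub_le_of_iIndepFun (fun i ↦ (hX i).prodMk (hY i)) hindep
          (measurableSet_exists_lt_abs_sum_boolSign_mul_qlossDiff τ r)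
          (fun β ↦ (one_half_le_measure_abs_sum_qlossDiff_sub_integral_le hX hY hindep hsub hc τ
            β).trans (measure_mono fun ω (hω : _ ≤ _) ↦ hω.trans (hradius β))) κ
    _ ≤ 4 * (μ {ω | ¬ GramBound (144 * c) fun i ↦ X i ω} + κ) := by
      gcongr with ω
      exact fun hω hx ↦ hω.not_ge
        (hx.measure_exists_lt_abs_sum_boolSign_mul_qlossDiff_le hc (Y · ω) τ)
    _ ≤ 4 * (ENNReal.ofReal (3 * Real.exp (-(7 * finrank ℝ E))) + κ) := by gcongr
    _ ≤ ENNReal.ofReal (Real.exp (-finrank ℝ E)) := by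
      rw [← ENNReal.ofReal_add (by positivity) (by positivity), ← ENNReal.ofReal_ofNat 4,
        ← ENNReal.ofReal_mul (by positivity)]
      exact ENNReal.ofReal_le_ofReal (four_mul_three_mul_exp_add_two_mul_exp_le finrank_pos)

theorem stmt_13_general [Nonempty ι] [Nontrivial E]
    (hX : ∀ i, Measurable (X i)) (hY : ∀ i, Measurable (Y i))
    (hindep : iIndepFun (fun i ω ↦ (X i ω, Y i ω)) μ)
    (hsub : ∀ i v, HasSubgaussianMGF (fun ω ↦ ⟪X i ω, v⟫) (c * ‖v‖₊ ^ 2) μ) (hc : 0 < c) (τ : ℝ) :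
    ENNReal.ofReal (1 - Real.exp (-finrank ℝ E)) ≤ μ {ω | ∀ β₁ β₂ : E,
      |empRisk τ (X · ω) (Y · ω) β₁ - empRisk τ (X · ω) (Y · ω) β₂
        - ∫ ω', (empRisk τ (X · ω') (Y · ω') β₁ - empRisk τ (X · ω') (Y · ω') β₂) ∂μ|
        ≤ 10656 * max τ (1 - τ) * √(c * finrank ℝ E / Fintype.card ι) * ‖β₁ - β₂‖} := by
  have := hindep.isProbabilityMeasure
  refine ofReal_one_sub_le_measure_of_measure_compl_le (Real.exp_nonneg _) <|
    (measure_mono ?_).trans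
      (measure_exists_lt_abs_sum_qlossDiff_sub_integral_le hX hY hindep hsub hc τ)
  intro ω hω
  contrapose! hω
  simp only [Set.mem_ofPred_eq, not_exists, not_lt] at hω
  refine not_not.2 fun β₁ β₂ ↦ ?_
  have hn : (0 : ℝ) < Fintype.card ι := Nat.cast_pos.2 Fintype.card_pos
  have hsqrt : √(c * Fintype.card ι * finrank ℝ E)
      = Fintype.card ι * √(c * finrank ℝ E / Fintype.card ι) := by
    rw [← Real.sqrt_sq hn.le, ← Real.sqrt_mul (by positivity), Real.sqrt_sq hn.le]
    congr 1
    field_simp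
  simp_rw [empRisk_sub_empRisk]
  rw [integral_const_mul, ← mul_sub, abs_mul, abs_of_pos (inv_pos.2 hn), inv_mul_le_iff₀ hn]
  refine (hω (β₁, β₂)).trans_eq ?_
  rw [hsqrt]
  ring

end Concentration

/-- **Uniform concentration of the empirical quantile loss** (Proposition 3 style):
there are universal constants `C₁, C₂ > 0` such that for any model with Gaussian
covariates satisfying Assumption 1 and independent observations, with probability at least
`1 − exp(−C₁ d) − exp(−√(n/log n))`, simultaneously for all `β₁, β₂`,
`|f(β₁) − f(β₂) − E[f(β₁) − f(β₂)]| ≤ C₂ max{τ,1−τ} √(C_u d/n) ‖β₁ − β₂‖`, where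
`f(β) = (1/n) ∑_i ρ_{Q,τ}(Y_i − ⟨X_i, β⟩)`. -/
theorem stmt_13 :
    ∃ C1 C2 : ℝ, 0 < C1 ∧ 0 < C2 ∧
    ∀ (d n : ℕ), 0 < d → 0 < n →
    ∀ (Ω : Type) (_ : MeasurableSpace Ω) (μ : Measure Ω), IsProbabilityMeasure μ →
    ∀ (τ Cl Cu : ℝ), τ ∈ Set.Ioo (0 : ℝ) 1 → 0 < Cl → 0 < Cu →
    ∀ (S : Matrix (Fin d) (Fin d) ℝ), S.IsSymm → S.PosDef →
    (∀ v : EuclideanSpace ℝ (Fin d),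
      Cl * ‖v‖ ^ 2 ≤ quadForm S v ∧ quadForm S v ≤ Cu * ‖v‖ ^ 2) →
    ∀ (X : Fin n → Ω → EuclideanSpace ℝ (Fin d)) (Y : Fin n → Ω → ℝ),
    (∀ i, Measurable (X i)) → (∀ i, Measurable (Y i)) →
    (∀ i (v : EuclideanSpace ℝ (Fin d)),
      Measure.map (fun ω => (inner ℝ v (X i ω) : ℝ)) μ
        = gaussianReal 0 (Real.toNNReal (quadForm S v))) →
    iIndepFun (fun i ω => (X i ω, Y i ω)) μ →
    ENNReal.ofReal (1 - Real.exp (-(C1 * d))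
        - Real.exp (-Real.sqrt ((n : ℝ) / Real.log n))) ≤
      μ {ω | ∀ β1 β2 : EuclideanSpace ℝ (Fin d),
        |((n : ℝ)⁻¹ * ∑ i : Fin n, qloss τ (Y i ω - (inner ℝ (X i ω) β1 : ℝ)))
          - ((n : ℝ)⁻¹ * ∑ i : Fin n, qloss τ (Y i ω - (inner ℝ (X i ω) β2 : ℝ)))
          - ∫ ω', (((n : ℝ)⁻¹ * ∑ i : Fin n, qloss τ (Y i ω' - (inner ℝ (X i ω') β1 : ℝ)))
              - ((n : ℝ)⁻¹ * ∑ i : Fin n, qloss τ (Y i ω' - (inner ℝ (X i ω') β2 : ℝ)))) ∂μ|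
          ≤ C2 * max τ (1 - τ) * Real.sqrt (Cu * d / n) * ‖β1 - β2‖} := by
  refine ⟨1, 10656, one_pos, by norm_num, ?_⟩
  intro d n hd hn Ω _ μ _ τ Cl Cu _ _ hCu S _ _ hS X Y hX hY hgauss hindep
  have : Nonempty (Fin n) := ⟨⟨0, hn⟩⟩
  have : Nontrivial (EuclideanSpace ℝ (Fin d)) :=
    Module.nontrivial_of_finrank_pos (R := ℝ) (by simpa using hd)
  have hsub (i : Fin n) (v : EuclideanSpace ℝ (Fin d)) :
      HasSubgaussianMGF (fun ω ↦ ⟪X i ω, v⟫) (Cu.toNNReal * ‖v‖₊ ^ 2) μ := by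
    simp_rw [real_inner_comm v]
    refine hasSubgaussianMGF_of_le (hasSubgaussianMGF_of_map_eq_gaussianReal (hgauss i v)) ?_
    simpa [Real.toNNReal_mul hCu.le, Real.toNNReal_pow, norm_toNNReal]
      using Real.toNNReal_le_toNNReal (hS v).2
  have hconcentration := stmt_13_general hX hY hindep hsub (Real.toNNReal_pos.2 hCu) τ
  simp only [empRisk, Fintype.card_fin, finrank_euclideanSpace_fin,
    Real.coe_toNNReal _ hCu.le] at hconcentration
  refine (ENNReal.ofReal_le_ofReal ?_).trans hconcentration
  rw [one_mul]
  linarith [Real.exp_pos (-√((n : ℝ) / Real.log n))]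
end
end

section
/- Let f(β) := (1/n) ∑_{i=1}^{n} ρ_{Q,τ}(Y_i − ⟨X_i, β⟩), where {X_i}_{i=1}^n follow Assumption 1 and {(X_i, Y_i)}_{i=1}^n are independent observations from the linear quantile model with noise ξ_i. Then: (i) for any fixed β_1, β_2 ∈ R^d and s > 0, with probability exceeding 1 − 2 exp(−C n s²/(C_u ‖β_1 − β_2‖_2²)) for some constant C, it holds that |f(β_1) − f(β_2) − E[f(β_1) − f(β_2)]| ≤ s; and (ii) for any fixed β_1 and s > 0, with probability exceeding 1 − 2 exp(−c_1 n s²/(C_u max{τ², (1−τ)²} ‖β_1 − β*‖_2²)), it holds that (1/n)|∑_{i=1}^{n} (⟨β_1 − β*, X_i⟩ · g_i − E[⟨β_1 − β*, X_i⟩ · g_i])| ≤ s, where g_i := −τ·1{ξ_i > ⟨X_i, β_1 − β*⟩} + (1−τ)·1{ξ_i < ⟨X_i, β_1 − β*⟩} + δ·1{ξ_i = ⟨X_i, β_1 − β*⟩} is the sub-gradient factor for any δ ∈ [−τ, 1−τ]. -/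
open MeasureTheory ProbabilityTheory

noncomputable section

/-- The sub-gradient factor of the quantile loss:
`−τ 1{u > 0} + (1−τ) 1{u < 0} + δ 1{u = 0}` with `δ ∈ [−τ, 1−τ]`. -/
def qsubgrad (τ δ u : ℝ) : ℝ := if 0 < u then -τ else if u < 0 then 1 - τ else δ

/-!
Each summand is dominated in absolute value by a fixed linear form `⟪v, Xᵢ⟫` of the covariate, up
to a bounded factor: the loss is Lipschitz and the sub-gradient factor is bounded. Domination
`|Z| ≤ |G|` passes to exponential moments because `cosh` is even and increasing in `|·|`, so the
symmetrized moment generating function of `Z` is at most that of `G`. Jensen's inequality then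
recentres: `𝔼 e^{t(Z - 𝔼Z)} ≤ 𝔼 e^{tZ} · 𝔼 e^{-tZ} ≤ (𝔼 cosh (tG))²`, so `Z - 𝔼Z` is sub-Gaussian
with twice the variance proxy of `G`, and the Chernoff bound applies to the independent sum.
-/

open scoped NNReal

section Domination

variable {Ω : Type*} {mΩ : MeasurableSpace Ω} {μ : Measure Ω} {Z G : Ω → ℝ} {c : ℝ≥0} {t : ℝ}

lemma exp_mul_add_exp_neg_mul_le_of_abs_le {x y : ℝ} (hxy : |x| ≤ |y|) (t : ℝ) :
    Real.exp (t * x) + Real.exp (-t * x) ≤ Real.exp (t * y) + Real.exp (-t * y) := by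
  have hcosh : Real.cosh (t * x) ≤ Real.cosh (t * y) := by
    rw [Real.cosh_le_cosh, abs_mul, abs_mul]
    gcongr
  rw [Real.cosh_eq, Real.cosh_eq] at hcosh
  simp only [neg_mul]
  linarith

lemma integrable_exp_mul_of_ae_abs_le (hZ : AEMeasurable Z μ)
    (hZG : ∀ᵐ ω ∂μ, |Z ω| ≤ |G ω|) (hGpos : Integrable (fun ω ↦ Real.exp (t * G ω)) μ)
    (hGneg : Integrable (fun ω ↦ Real.exp (-t * G ω)) μ) :
    Integrable (fun ω ↦ Real.exp (t * Z ω)) μ := by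
  refine (hGpos.add hGneg).mono' (by fun_prop) ?_
  filter_upwards [hZG] with ω hω
  rw [Real.norm_of_nonneg (Real.exp_pos _).le]
  exact (le_add_of_nonneg_right (Real.exp_pos _).le).trans
    (exp_mul_add_exp_neg_mul_le_of_abs_le hω t)

lemma mgf_add_mgf_neg_le_of_ae_abs_le (hZ : AEMeasurable Z μ)
    (hZG : ∀ᵐ ω ∂μ, |Z ω| ≤ |G ω|) (hGpos : Integrable (fun ω ↦ Real.exp (t * G ω)) μ)
    (hGneg : Integrable (fun ω ↦ Real.exp (-t * G ω)) μ) :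
    mgf Z μ t + mgf Z μ (-t) ≤ mgf G μ t + mgf G μ (-t) := by
  have hZpos := integrable_exp_mul_of_ae_abs_le hZ hZG hGpos hGneg
  have hZneg := integrable_exp_mul_of_ae_abs_le hZ hZG hGneg (by simpa using hGpos)
  simp only [mgf]
  rw [← integral_add hZpos hZneg, ← integral_add hGpos hGneg]
  refine integral_mono_ae (hZpos.add hZneg) (hGpos.add hGneg) ?_
  filter_upwards [hZG] with ω hω using exp_mul_add_exp_neg_mul_le_of_abs_le hω t

variable [IsProbabilityMeasure μ]

lemma exp_mul_integral_le_mgf (hZ : Integrable Z μ)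
    (hexp : Integrable (fun ω ↦ Real.exp (t * Z ω)) μ) :
    Real.exp (t * ∫ ω, Z ω ∂μ) ≤ mgf Z μ t := by
  rw [← integral_const_mul]
  exact convexOn_exp.map_integral_le Real.continuous_exp.continuousOn isClosed_univ
    (by simp) (hZ.const_mul t) hexp

lemma mgf_sub_integral_le_mgf_mul_mgf_neg (hZ : Integrable Z μ)
    (hexp : Integrable (fun ω ↦ Real.exp (-t * Z ω)) μ) :
    mgf (fun ω ↦ Z ω - ∫ ω', Z ω' ∂μ) μ t ≤ mgf Z μ t * mgf Z μ (-t) := by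
  simp only [sub_eq_add_neg, mgf_add_const, mul_neg, ← neg_mul]
  exact mul_le_mul_of_nonneg_left (exp_mul_integral_le_mgf hZ hexp) mgf_nonneg

lemma hasSubgaussianMGF_sub_integral_of_ae_abs_le (hG : HasSubgaussianMGF G c μ)
    (hZ : AEMeasurable Z μ) (hZG : ∀ᵐ ω ∂μ, |Z ω| ≤ |G ω|) :
    HasSubgaussianMGF (fun ω ↦ Z ω - ∫ ω', Z ω' ∂μ) (2 * c) μ := by
  have hexp (t : ℝ) : Integrable (fun ω ↦ Real.exp (t * Z ω)) μ :=
    integrable_exp_mul_of_ae_abs_le hZ hZG (hG.integrable_exp_mul t) (hG.integrable_exp_mul (-t))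
  refine ⟨fun t ↦ ?_, fun t ↦ ?_⟩
  · simpa only [mul_sub, Real.exp_sub] using (hexp t).div_const _
  have hsymm : mgf Z μ t + mgf Z μ (-t) ≤ 2 * Real.exp (c * t ^ 2 / 2) := by
    have hneg := hG.mgf_le (-t)
    rw [neg_sq] at hneg
    linarith [hG.mgf_le t, mgf_add_mgf_neg_le_of_ae_abs_le hZ hZG
      (hG.integrable_exp_mul t) (hG.integrable_exp_mul (-t))]
  calc mgf (fun ω ↦ Z ω - ∫ ω', Z ω' ∂μ) μ t
      ≤ mgf Z μ t * mgf Z μ (-t) :=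
        mgf_sub_integral_le_mgf_mul_mgf_neg
          (hG.integrable.mono hZ.aestronglyMeasurable hZG) (hexp (-t))
    _ ≤ Real.exp (c * t ^ 2 / 2) ^ 2 := by
        linarith [four_mul_le_sq_add (mgf Z μ t) (mgf Z μ (-t)),
          pow_le_pow_left₀ (add_nonneg mgf_nonneg mgf_nonneg) hsymm 2]
    _ = Real.exp (↑(2 * c) * t ^ 2 / 2) := by
        rw [← Real.exp_nat_mul]
        push_cast
        ring_nf

end Domination

section Concentration

variable {Ω : Type*} {mΩ : MeasurableSpace Ω} {μ : Measure Ω} {c : ℝ≥0}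

lemma one_sub_two_mul_exp_le_measureReal_abs_le [IsProbabilityMeasure μ] {W : Ω → ℝ}
    (hW : HasSubgaussianMGF W c μ) {ε : ℝ} (hε : 0 ≤ ε) :
    1 - 2 * Real.exp (-ε ^ 2 / (2 * c)) ≤ μ.real {ω | |W ω| ≤ ε} := by
  have hcover : (Set.univ : Set Ω) ⊆ {ω | |W ω| ≤ ε} ∪ ({ω | ε ≤ W ω} ∪ {ω | ε ≤ (-W) ω}) := by
    intro ω _
    simpa only [Set.mem_union, Set.mem_ofPred_eq, Pi.neg_apply, ← le_abs] using le_total _ _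
  have hsum := (measureReal_mono (μ := μ) hcover).trans (measureReal_union_le _ _)
  have htails := measureReal_union_le (μ := μ) {ω | ε ≤ W ω} {ω | ε ≤ (-W) ω}
  rw [probReal_univ] at hsum
  linarith [hW.measure_ge_le hε, hW.neg.measure_ge_le hε]

variable {n : ℕ} {Z G : Fin n → Ω → ℝ} {L : ℝ≥0} {s : ℝ}

lemma one_sub_two_mul_exp_le_measureReal_abs_sum_sub_integral_le (hn : 0 < n)
    (hG : ∀ i, HasSubgaussianMGF (G i) c μ) (hZ : ∀ i, AEMeasurable (Z i) μ)
    (hZG : ∀ i, ∀ᵐ ω ∂μ, |Z i ω| ≤ L * |G i ω|) (hind : iIndepFun Z μ) (hs : 0 ≤ s) :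
    1 - 2 * Real.exp (-(1 / 4 * n * s ^ 2 / (L ^ 2 * c))) ≤
      μ.real {ω | (n : ℝ)⁻¹ * |∑ i, (Z i ω - ∫ ω', Z i ω' ∂μ)| ≤ s} := by
  have := hind.isProbabilityMeasure
  have hn' : (0 : ℝ) < n := by exact_mod_cast hn
  have hZ_sub (i : Fin n) :
      HasSubgaussianMGF (fun ω ↦ Z i ω - ∫ ω', Z i ω' ∂μ) (2 * (L ^ 2 * c)) μ :=
    hasSubgaussianMGF_sub_integral_of_ae_abs_le ((hG i).const_mul L) (hZ i) <| by
      simpa only [abs_mul, NNReal.abs_eq] using hZG i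
  have hsum : HasSubgaussianMGF (fun ω ↦ ∑ i, (Z i ω - ∫ ω', Z i ω' ∂μ))
      (∑ _i : Fin n, 2 * (L ^ 2 * c)) μ :=
    .sum_of_iIndepFun (X := fun i ω ↦ Z i ω - ∫ ω', Z i ω' ∂μ)
      (hind.comp (fun i z ↦ z - ∫ ω', Z i ω' ∂μ) (fun _ ↦ by fun_prop)) (fun i _ ↦ hZ_sub i)
  convert one_sub_two_mul_exp_le_measureReal_abs_le hsum (ε := n * s) (by positivity) using 4
  · rcases eq_or_ne ((L : ℝ) ^ 2 * c) 0 with h | _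
    · simp [h]
    · simp only [Finset.sum_const, Finset.card_univ, Fintype.card_fin, nsmul_eq_mul]
      push_cast
      field_simp
      ring
  · rw [inv_mul_le_iff₀ hn']

end Concentration

section SubgaussianVector

variable {E Ω : Type*} [NormedAddCommGroup E] [InnerProductSpace ℝ E] {mΩ : MeasurableSpace Ω}
  {μ : Measure Ω}

/-- A random vector `X` is sub-Gaussian with variance proxy `K` if each linear form `⟪v, X⟫` is
sub-Gaussian with variance proxy `K ‖v‖²`. Such `X` is centred, as `HasSubgaussianMGF` requires. -/
def IsSubgaussianVector (X : Ω → E) (K : ℝ≥0) (μ : Measure Ω) : Prop :=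
  ∀ v : E, HasSubgaussianMGF (fun ω ↦ inner ℝ v (X ω)) (K * ‖v‖₊ ^ 2) μ

lemma hasSubgaussianMGF_of_map_eq_gaussianReal_s14 {G : Ω → ℝ} {σ c : ℝ≥0} (hG : AEMeasurable G μ)
    (hmap : μ.map G = gaussianReal 0 σ) (hσ : σ ≤ c) : HasSubgaussianMGF G c μ := by
  refine ⟨fun t ↦ ?_, fun t ↦ ?_⟩
  · have hexp := integrable_exp_mul_gaussianReal (μ := 0) (v := σ) t
    rw [← hmap] at hexp
    exact hexp.comp_aemeasurable hG
  · rw [mgf_gaussianReal hmap, zero_mul, zero_add]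
    gcongr

lemma isSubgaussianVector_of_map_inner_eq_gaussianReal {X : Ω → E} {K : ℝ≥0} {σ : E → ℝ≥0}
    (hX : ∀ v, AEMeasurable (fun ω ↦ inner ℝ v (X ω)) μ)
    (hmap : ∀ v, μ.map (fun ω ↦ inner ℝ v (X ω)) = gaussianReal 0 (σ v))
    (hσ : ∀ v, σ v ≤ K * ‖v‖₊ ^ 2) : IsSubgaussianVector X K μ :=
  fun v ↦ hasSubgaussianMGF_of_map_eq_gaussianReal_s14 (hX v) (hmap v) (hσ v)

/-- The empirical risk `f(β) = (1/n) ∑ᵢ ρ(Yᵢ - ⟪Xᵢ, β⟫)` of the linear predictor `β`. -/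
def empiricalRisk {n : ℕ} (ρ : ℝ → ℝ) (X : Fin n → Ω → E) (Y : Fin n → Ω → ℝ) (β : E) (ω : Ω) :
    ℝ :=
  (n : ℝ)⁻¹ * ∑ i, ρ (Y i ω - inner ℝ (X i ω) β)

variable {n : ℕ} {X : Fin n → Ω → E} {K L : ℝ≥0} {s : ℝ}

lemma abs_empiricalRisk_sub_sub_integral {ρ : ℝ → ℝ} {Y : Fin n → Ω → ℝ} {β₁ β₂ : E}
    (hint : ∀ i, Integrable
      (fun ω ↦ ρ (Y i ω - inner ℝ (X i ω) β₁) - ρ (Y i ω - inner ℝ (X i ω) β₂)) μ) (ω : Ω) :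
    |empiricalRisk ρ X Y β₁ ω - empiricalRisk ρ X Y β₂ ω
        - ∫ ω', (empiricalRisk ρ X Y β₁ ω' - empiricalRisk ρ X Y β₂ ω') ∂μ| =
      (n : ℝ)⁻¹ * |∑ i, (ρ (Y i ω - inner ℝ (X i ω) β₁) - ρ (Y i ω - inner ℝ (X i ω) β₂)
        - ∫ ω', (ρ (Y i ω' - inner ℝ (X i ω') β₁) - ρ (Y i ω' - inner ℝ (X i ω') β₂)) ∂μ)| := by
  simp only [empiricalRisk, ← mul_sub, ← Finset.sum_sub_distrib]
  rw [integral_const_mul, integral_finsetSum _ (fun i _ ↦ hint i), ← mul_sub,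
    ← Finset.sum_sub_distrib, abs_mul, abs_of_nonneg (by positivity)]

variable [MeasurableSpace E] [OpensMeasurableSpace E]

lemma measurable_inner_const (v : E) : Measurable (fun x : E ↦ (inner ℝ x v : ℝ)) :=
  (continuous_id.inner continuous_const).measurable

lemma measurable_const_inner (v : E) : Measurable (fun x : E ↦ (inner ℝ v x : ℝ)) :=
  (continuous_const.inner continuous_id).measurable

theorem one_sub_two_mul_exp_le_measureReal_abs_empiricalRisk_sub_le (hn : 0 < n)
    {ρ : ℝ → ℝ} (hρ : LipschitzWith L ρ) (hX : ∀ i, IsSubgaussianVector (X i) K μ)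
    {Y : Fin n → Ω → ℝ} (hXm : ∀ i, AEMeasurable (X i) μ) (hYm : ∀ i, AEMeasurable (Y i) μ)
    (hind : iIndepFun (fun i ω ↦ (X i ω, Y i ω)) μ) (β₁ β₂ : E) (hs : 0 ≤ s) :
    1 - 2 * Real.exp (-(1 / 4 * n * s ^ 2 / (L ^ 2 * (K * ‖β₁ - β₂‖ ^ 2)))) ≤
      μ.real {ω | |empiricalRisk ρ X Y β₁ ω - empiricalRisk ρ X Y β₂ ω
        - ∫ ω', (empiricalRisk ρ X Y β₁ ω' - empiricalRisk ρ X Y β₂ ω') ∂μ| ≤ s} := by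
  have := hind.isProbabilityMeasure
  let lossDiff (p : E × ℝ) : ℝ := ρ (p.2 - inner ℝ p.1 β₁) - ρ (p.2 - inner ℝ p.1 β₂)
  have hdiff : Measurable lossDiff := by
    have hresidual (β : E) : Measurable fun p : E × ℝ ↦ p.2 - inner ℝ p.1 β :=
      measurable_snd.sub ((measurable_inner_const β).comp measurable_fst)
    exact (hρ.continuous.measurable.comp (hresidual β₁)).sub
      (hρ.continuous.measurable.comp (hresidual β₂))
  have hZm (i : Fin n) : AEMeasurable (fun ω ↦ lossDiff (X i ω, Y i ω)) μ :=
    hdiff.comp_aemeasurable ((hXm i).prodMk (hYm i))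
  have hbound (i : Fin n) (ω : Ω) :
      |lossDiff (X i ω, Y i ω)| ≤ L * |inner ℝ (β₁ - β₂) (X i ω)| := by
    have hlip := hρ.dist_le_mul (Y i ω - inner ℝ (X i ω) β₁) (Y i ω - inner ℝ (X i ω) β₂)
    rwa [Real.dist_eq, dist_sub_left, Real.dist_eq, ← inner_sub_right,
      real_inner_comm (β₁ - β₂)] at hlip
  have hint (i : Fin n) : Integrable (fun ω ↦ lossDiff (X i ω, Y i ω)) μ :=
    ((hX i (β₁ - β₂)).integrable.const_mul (L : ℝ)).mono (hZm i).aestronglyMeasurable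
      (ae_of_all _ fun ω ↦ by simpa [abs_mul] using hbound i ω)
  simp only [abs_empiricalRisk_sub_sub_integral hint]
  exact_mod_cast one_sub_two_mul_exp_le_measureReal_abs_sum_sub_integral_le hn
    (fun i ↦ hX i (β₁ - β₂)) hZm (fun i ↦ ae_of_all _ (hbound i))
    (hind.comp (fun _ ↦ lossDiff) (fun _ ↦ hdiff)) hs

theorem one_sub_two_mul_exp_le_measureReal_abs_sum_inner_mul_sub_integral_le (hn : 0 < n)
    (hX : ∀ i, IsSubgaussianVector (X i) K μ) {g : Fin n → Ω → ℝ}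
    (hgm : ∀ i, AEMeasurable (g i) μ) (hg : ∀ i, ∀ᵐ ω ∂μ, |g i ω| ≤ L)
    (hind : iIndepFun (fun i ω ↦ (X i ω, g i ω)) μ) (v : E) (hs : 0 ≤ s) :
    1 - 2 * Real.exp (-(1 / 4 * n * s ^ 2 / (L ^ 2 * (K * ‖v‖ ^ 2)))) ≤
      μ.real {ω | (n : ℝ)⁻¹ * |∑ i, (inner ℝ v (X i ω) * g i ω
        - ∫ ω', inner ℝ v (X i ω') * g i ω' ∂μ)| ≤ s} := by
  have hprod : Measurable fun p : E × ℝ ↦ inner ℝ v p.1 * p.2 :=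
    ((measurable_const_inner v).comp measurable_fst).mul measurable_snd
  have hbound (i : Fin n) : ∀ᵐ ω ∂μ, |inner ℝ v (X i ω) * g i ω| ≤ L * |inner ℝ v (X i ω)| := by
    filter_upwards [hg i] with ω hω
    rw [abs_mul, mul_comm]
    gcongr
  exact_mod_cast one_sub_two_mul_exp_le_measureReal_abs_sum_sub_integral_le hn
    (fun i ↦ hX i v) (fun i ↦ (hX i v).aemeasurable.mul (hgm i)) hbound
    (hind.comp (fun _ p ↦ inner ℝ v p.1 * p.2) (fun _ ↦ hprod)) hs

end SubgaussianVector

section QuantileLoss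

variable {τ δ : ℝ}

lemma qloss_eq_max (τ x : ℝ) : qloss τ x = max (τ * x) ((τ - 1) * x) := by
  rw [qloss]
  split_ifs with hx
  · exact (max_eq_left (by linarith)).symm
  · exact (max_eq_right (by linarith)).symm

lemma lipschitzWith_qloss (τ : ℝ) : LipschitzWith (max ‖τ‖₊ ‖τ - 1‖₊) (qloss τ) := by
  rw [funext (qloss_eq_max τ)]
  exact (lipschitzWith_smul τ).max (lipschitzWith_smul (τ - 1))

lemma lipschitzWith_one_qloss (hτ : τ ∈ Set.Icc (0 : ℝ) 1) : LipschitzWith 1 (qloss τ) := by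
  refine (lipschitzWith_qloss τ).weaken (max_le ?_ ?_) <;>
    rw [← NNReal.coe_le_coe, coe_nnnorm, Real.norm_eq_abs, NNReal.coe_one, abs_le] <;>
    constructor <;> linarith [hτ.1, hτ.2]

lemma abs_qsubgrad_le (hδ : δ ∈ Set.Icc (-τ) (1 - τ)) (u : ℝ) :
    |qsubgrad τ δ u| ≤ max τ (1 - τ) := by
  obtain ⟨hδ_lower, hδ_upper⟩ := hδ
  rw [qsubgrad, abs_le]
  split_ifs <;> constructor <;> linarith [le_max_left τ (1 - τ), le_max_right τ (1 - τ)]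

lemma measurable_qsubgrad (τ δ : ℝ) : Measurable (qsubgrad τ δ) :=
  .ite measurableSet_Ioi measurable_const (.ite measurableSet_Iio measurable_const measurable_const)

end QuantileLoss

theorem stmt_14_general {E Ω : Type*} [NormedAddCommGroup E] [InnerProductSpace ℝ E]
    [MeasurableSpace E] [OpensMeasurableSpace E] {mΩ : MeasurableSpace Ω} {μ : Measure Ω}
    {n : ℕ} (hn : 0 < n) {τ : ℝ} (hτ : τ ∈ Set.Icc (0 : ℝ) 1) {K : ℝ≥0}
    {X : Fin n → Ω → E} {ξ : Fin n → Ω → ℝ} (hX : ∀ i, IsSubgaussianVector (X i) K μ)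
    (hXm : ∀ i, AEMeasurable (X i) μ) (hξm : ∀ i, AEMeasurable (ξ i) μ)
    (hind : iIndepFun (fun i ω ↦ (X i ω, ξ i ω)) μ) (βstar : E) :
    let Y : Fin n → Ω → ℝ := fun i ω ↦ inner ℝ (X i ω) βstar + ξ i ω
    (∀ (β₁ β₂ : E) (s : ℝ), 0 < s →
      ENNReal.ofReal (1 - 2 * Real.exp (-(1 / 4 * n * s ^ 2 / (K * ‖β₁ - β₂‖ ^ 2)))) ≤
        μ {ω | |empiricalRisk (qloss τ) X Y β₁ ω - empiricalRisk (qloss τ) X Y β₂ ω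
          - ∫ ω', (empiricalRisk (qloss τ) X Y β₁ ω' - empiricalRisk (qloss τ) X Y β₂ ω') ∂μ|
            ≤ s}) ∧
    (∀ (β₁ : E) (δ : ℝ), δ ∈ Set.Icc (-τ) (1 - τ) → ∀ s : ℝ, 0 < s →
      ENNReal.ofReal (1 - 2 * Real.exp
          (-(1 / 4 * n * s ^ 2 / (K * max τ (1 - τ) ^ 2 * ‖β₁ - βstar‖ ^ 2)))) ≤
        μ {ω | (n : ℝ)⁻¹ * |∑ i, (inner ℝ (β₁ - βstar) (X i ω) *
              qsubgrad τ δ (ξ i ω - inner ℝ (X i ω) (β₁ - βstar))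
            - ∫ ω', inner ℝ (β₁ - βstar) (X i ω') *
              qsubgrad τ δ (ξ i ω' - inner ℝ (X i ω') (β₁ - βstar)) ∂μ)| ≤ s}) := by
  intro Y
  have hfst (v : E) : Measurable fun p : E × ℝ ↦ (inner ℝ p.1 v : ℝ) :=
    (measurable_inner_const v).comp measurable_fst
  refine ⟨fun β₁ β₂ s hs ↦ ENNReal.ofReal_le_of_le_toReal ?_,
    fun β₁ δ hδ s hs ↦ ENNReal.ofReal_le_of_le_toReal ?_⟩
  · have hresponse : Measurable fun p : E × ℝ ↦ inner ℝ p.1 βstar + p.2 :=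
      (hfst βstar).add measurable_snd
    have hYm (i : Fin n) : AEMeasurable (Y i) μ :=
      hresponse.comp_aemeasurable ((hXm i).prodMk (hξm i))
    have hXY : iIndepFun (fun i ω ↦ (X i ω, Y i ω)) μ :=
      hind.comp (fun _ p ↦ (p.1, inner ℝ p.1 βstar + p.2))
        (fun _ ↦ measurable_fst.prodMk hresponse)
    have hconc := one_sub_two_mul_exp_le_measureReal_abs_empiricalRisk_sub_le hn
      (lipschitzWith_one_qloss hτ) hX hXm hYm hXY β₁ β₂ hs.le
    rwa [NNReal.coe_one, one_pow, one_mul] at hconc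
  · let factor (p : E × ℝ) : ℝ := qsubgrad τ δ (p.2 - inner ℝ p.1 (β₁ - βstar))
    have hfactor : Measurable factor :=
      (measurable_qsubgrad τ δ).comp (measurable_snd.sub (hfst (β₁ - βstar)))
    have hXg : iIndepFun (fun i ω ↦ (X i ω, factor (X i ω, ξ i ω))) μ :=
      hind.comp (fun _ p ↦ (p.1, factor p)) (fun _ ↦ measurable_fst.prodMk hfactor)
    have hconc := one_sub_two_mul_exp_le_measureReal_abs_sum_inner_mul_sub_integral_le
      (L := .mk (max τ (1 - τ)) (hτ.1.trans (le_max_left _ _))) hn hX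
      (fun i ↦ hfactor.comp_aemeasurable ((hXm i).prodMk (hξm i)))
      (fun i ↦ ae_of_all _ fun ω ↦ abs_qsubgrad_le hδ _) hXg (β₁ - βstar) hs.le
    rwa [NNReal.coe_mk, mul_left_comm, ← mul_assoc] at hconc

/-- **Pointwise concentration with independence** (Proposition `concentration with
independence`): there are universal constants `C, c₁ > 0` such that, in the linear quantile
model with Gaussian covariates (Assumption 1) and independent observations:
(i) for fixed `β₁, β₂` and any `s > 0`, with probability at least
`1 − 2 exp(−C n s²/(C_u ‖β₁ − β₂‖²))`, the centered empirical loss difference is `≤ s`;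
(ii) for fixed `β₁`, any `δ ∈ [−τ,1−τ]` and any `s > 0`, with probability at least
`1 − 2 exp(−c₁ n s²/(C_u max{τ,1−τ}² ‖β₁ − β*‖²))`, the centered sub-gradient inner-product
average is `≤ s`. -/
theorem stmt_14 :
    ∃ C c1 : ℝ, 0 < C ∧ 0 < c1 ∧
    ∀ (d n : ℕ), 0 < d → 0 < n →
    ∀ (Ω : Type) (_ : MeasurableSpace Ω) (μ : Measure Ω), IsProbabilityMeasure μ →
    ∀ (τ Cl Cu : ℝ), τ ∈ Set.Ioo (0 : ℝ) 1 → 0 < Cl → 0 < Cu →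
    ∀ (S : Matrix (Fin d) (Fin d) ℝ), S.IsSymm → S.PosDef →
    (∀ v : EuclideanSpace ℝ (Fin d),
      Cl * ‖v‖ ^ 2 ≤ quadForm S v ∧ quadForm S v ≤ Cu * ‖v‖ ^ 2) →
    ∀ (βstar : EuclideanSpace ℝ (Fin d))
      (X : Fin n → Ω → EuclideanSpace ℝ (Fin d)) (ξ : Fin n → Ω → ℝ),
    (∀ i, Measurable (X i)) → (∀ i, Measurable (ξ i)) →
    (∀ i (v : EuclideanSpace ℝ (Fin d)),
      Measure.map (fun ω => (inner ℝ v (X i ω) : ℝ)) μ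
        = gaussianReal 0 (Real.toNNReal (quadForm S v))) →
    iIndepFun (fun i ω => (X i ω, ξ i ω)) μ →
    -- part (i)
    (∀ (β1 β2 : EuclideanSpace ℝ (Fin d)) (s : ℝ), 0 < s →
      ENNReal.ofReal (1 - 2 * Real.exp (-(C * n * s ^ 2 / (Cu * ‖β1 - β2‖ ^ 2)))) ≤
        μ {ω |
          |((n : ℝ)⁻¹ * ∑ i : Fin n, qloss τ
              ((inner ℝ (X i ω) βstar : ℝ) + ξ i ω - (inner ℝ (X i ω) β1 : ℝ)))
            - ((n : ℝ)⁻¹ * ∑ i : Fin n, qloss τ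
              ((inner ℝ (X i ω) βstar : ℝ) + ξ i ω - (inner ℝ (X i ω) β2 : ℝ)))
            - ∫ ω', (((n : ℝ)⁻¹ * ∑ i : Fin n, qloss τ
                ((inner ℝ (X i ω') βstar : ℝ) + ξ i ω' - (inner ℝ (X i ω') β1 : ℝ)))
              - ((n : ℝ)⁻¹ * ∑ i : Fin n, qloss τ
                ((inner ℝ (X i ω') βstar : ℝ) + ξ i ω' - (inner ℝ (X i ω') β2 : ℝ)))) ∂μ|
            ≤ s}) ∧
    -- part (ii)
    (∀ (β1 : EuclideanSpace ℝ (Fin d)) (δ : ℝ), δ ∈ Set.Icc (-τ) (1 - τ) →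
      ∀ s : ℝ, 0 < s →
      ENNReal.ofReal (1 - 2 * Real.exp
          (-(c1 * n * s ^ 2 / (Cu * (max τ (1 - τ)) ^ 2 * ‖β1 - βstar‖ ^ 2)))) ≤
        μ {ω |
          (n : ℝ)⁻¹ *
            |∑ i : Fin n,
              ((inner ℝ (β1 - βstar) (X i ω) : ℝ) *
                  qsubgrad τ δ (ξ i ω - (inner ℝ (X i ω) (β1 - βstar) : ℝ))
                - ∫ ω', (inner ℝ (β1 - βstar) (X i ω') : ℝ) *
                    qsubgrad τ δ (ξ i ω' - (inner ℝ (X i ω') (β1 - βstar) : ℝ)) ∂μ)|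
            ≤ s}) := by
  refine ⟨1 / 4, 1 / 4, by norm_num, by norm_num, ?_⟩
  intro d n _ hn Ω _ μ _ τ Cl Cu hτ _ hCu S _ _ hS βstar X ξ hX hξ hlaw hind
  lift Cu to ℝ≥0 using hCu.le
  have hsub (i : Fin n) : IsSubgaussianVector (X i) Cu μ :=
    isSubgaussianVector_of_map_inner_eq_gaussianReal
      (fun v ↦ ((measurable_const_inner v).comp (hX i)).aemeasurable) (hlaw i)
      (fun v ↦ Real.toNNReal_le_iff_le_coe.2 (hS v).2)
  exact stmt_14_general hn (Set.Ioo_subset_Icc_self hτ) hsub (fun i ↦ (hX i).aemeasurable)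
    (fun i ↦ (hξ i).aemeasurable) hind βstar
end
end
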